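/- Let n > 1 be an odd integer. There exist infinitely many pairwise non-isomorphic number fields K with the following properties: there is a positive integer y with y ≡ 19 (mod 36), y not divisible by 5, and y not divisible by 7, such that the polynomial x⁶ + 3x⁵ + ((yⁿ−127)/36)x⁴ + ((yⁿ−217)/18)x³ + ((yⁿ−127)/36)x² + 3x + 1 is irreducible over ℚ and K is its splitting field; K is a totally imaginary Galois extension of ℚ of degree 6 with Galois group isomorphic to the symmetric group S₃; and rank_n Cl(K) ≥ 5. -/

import Mathlib

open Polynomial NumberField

/-- `M` contains a subgroup isomorphic to `(ℤ/nℤ)^s`, i.e. `rank_n M ≥ s`. -/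
def HasZModRankGE (M : Type*) [CommGroup M] (n s : ℕ) : Prop :=
  ∃ φ : (Multiplicative (Fin s → ZMod n)) →* M, Function.Injective φ

/-- A number field (here a subfield of `ℂ`) is totally imaginary if none of its complex
embeddings takes only real values. -/
def TotallyImaginary (K : Type*) [Field K] : Prop :=
  ∀ φ : K →+* ℂ, ∃ x : K, (φ x).im ≠ 0

/-!
Let `yⁿ = 36A + 127` and let `x` be a root of `sextic A`. The eight linear forms `x - 2`, `x`,
`x + 1`, `x + 3`, `2x - 1`, `3x + 1`, `2x + 3`, `3x + 2` multiply to `-yⁿ` times `(x(x + 1))³`,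
where `x` and `x + 1` are units, and as `y` is prime to `840` they are pairwise coprime. Hence each
of them generates the `n`-th power of an ideal. The unit rank is `2`, so seven of these virtual
units that are independent modulo `n`-th powers give classes generating a group of `n`-rank at
least `7 - 2 = 5`.

Independence is tested at primes `l ∣ y`. There `x ↦ 2` defines an embedding `K → ℚ_l`, which turns
the forms other than `x - 2` into monomials in `2, 3, 5, 7`; the conjugates `-1 - x` and `1 / x` of
`x` provide two further tests, since they permute the forms up to units. It remains to let `y` be
divisible by primes modulo which no monomial in `2, 3, 5, 7` is a `p`-th power unless all exponents
are divisible by `p`. Such primes exist: if `m` is not a `p`-th power but is one modulo almost all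
primes, then `ℚ(m^(1/p))` has an ideal of norm `l` for almost all `l`, and a second prime ideal of
norm `l` when `l ≡ 1 (mod p)`. Multiplying the latter by ideals of every norm `≡ 1 (mod M)`, for a
suitable `M`, gives about `s / l` ideals of norm `O(s)` for each such `l`. As `∑ 1 / l` diverges,
this contradicts the linear growth of the ideal count.

The fields are infinitely many because `√(100 - yⁿ)` lies in `K`, so that `K` does not embed into
`ℚ_q` for some prime `q`, while the fields with `q ∣ y` do.
-/

section PrimesInProgressions

open ArithmeticFunction ArithmeticFunction.vonMangoldt Filter Topology

variable {q : ℕ} {a : ZMod q}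

lemma sub_one_mul_log_div_rpow_le {x : ℝ} (hx : 1 < x) (k : ℕ) :
    (x - 1) * (Real.log k / (k : ℝ) ^ x) ≤ 1 / k := by
  rcases k.eq_zero_or_pos with rfl | hk
  · simp
  have hk' : (0 : ℝ) < k := by exact_mod_cast hk
  have hx' : 0 < x - 1 := sub_pos.mpr hx
  calc (x - 1) * (Real.log k / (k : ℝ) ^ x)
      ≤ (x - 1) * ((k : ℝ) ^ (x - 1) / (x - 1) / (k : ℝ) ^ x) := by
        gcongr
        exact Real.log_natCast_le_rpow_div k hx'
    _ = 1 / k := by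
        rw [Real.rpow_sub_one hk'.ne']
        field_simp

lemma norm_sub_one_mul_residueClass_div_rpow_le {x : ℝ} (hx : x ∈ Set.Ioc 1 2) (k : ℕ) :
    ‖(x - 1) * (residueClass a k / (k : ℝ) ^ x)‖ ≤
      (if k.Prime then 0 else residueClass a k) / k +
        {l : ℕ | l.Prime ∧ (l : ZMod q) = a}.indicator (fun l ↦ (1 / l : ℝ)) k := by
  have hx1 : 0 ≤ x - 1 := by linarith [hx.1]
  have hnonneg := residueClass_nonneg a k
  rw [Real.norm_of_nonneg (by positivity)]
  by_cases hk : k.Prime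
  · by_cases hka : (k : ZMod q) = a
    · simpa [residueClass, hk, hka, vonMangoldt_apply_prime] using
        sub_one_mul_log_div_rpow_le hx.1 k
    · simp [residueClass, hka]
  · rcases k.eq_zero_or_pos with rfl | hk0
    · simp [Nat.not_prime_zero]
    have hk1 : (1 : ℝ) ≤ k := by exact_mod_cast hk0
    simp only [hk, if_false, Set.indicator, Set.mem_ofPred_eq, false_and, add_zero]
    calc (x - 1) * (residueClass a k / (k : ℝ) ^ x)
        ≤ 1 * (residueClass a k / (k : ℝ) ^ (1 : ℝ)) := by
          gcongr
          · linarith [hx.2]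
          · exact hx.1.le
      _ = residueClass a k / k := by rw [one_mul, Real.rpow_one]

lemma tendsto_sub_one_mul_tsum_residueClass
    (h : Summable ({l : ℕ | l.Prime ∧ (l : ZMod q) = a}.indicator fun l ↦ (1 / l : ℝ))) :
    Tendsto (fun x : ℝ ↦ (x - 1) * ∑' k : ℕ, residueClass a k / (k : ℝ) ^ x) (𝓝[>] 1) (𝓝 0) := by
  simp only [← tsum_mul_left]
  rw [← tsum_zero (α := ℝ) (β := ℕ)]
  refine tendsto_tsum_of_dominated_convergence
    ((summable_residueClass_non_primes_div a).add h) (fun k ↦ ?_) ?_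
  · rcases k.eq_zero_or_pos with rfl | hk
    · simp
    have hk' : (k : ℝ) ≠ 0 := by exact_mod_cast hk.ne'
    have hcont : ContinuousAt (fun x : ℝ ↦ (x - 1) * (residueClass a k / (k : ℝ) ^ x)) 1 :=
      (by fun_prop : ContinuousAt (fun x : ℝ ↦ x - 1) 1).mul
        (continuousAt_const.div (Real.continuousAt_const_rpow hk') (by positivity))
    simpa using hcont.tendsto.mono_left nhdsWithin_le_nhds
  · filter_upwards [Ioc_mem_nhdsGT (by norm_num : (1 : ℝ) < 2)] with x hx k
    exact norm_sub_one_mul_residueClass_div_rpow_le hx k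

theorem not_summable_one_div_primes_eq_mod [NeZero q] (ha : IsUnit a) :
    ¬ Summable ({l : ℕ | l.Prime ∧ (l : ZMod q) = a}.indicator fun l ↦ (1 / l : ℝ)) := by
  intro h
  obtain ⟨C, hC⟩ := LSeries_residueClass_lower_bound ha
  have hlower : Tendsto (fun x : ℝ ↦ (q.totient : ℝ)⁻¹ - C * (x - 1)) (𝓝[>] 1)
      (𝓝 ((q.totient : ℝ)⁻¹ - C * (1 - 1))) :=
    (by fun_prop : Continuous fun x : ℝ ↦ (q.totient : ℝ)⁻¹ - C * (x - 1)).tendsto 1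
      |>.mono_left nhdsWithin_le_nhds
  have hle : (q.totient : ℝ)⁻¹ - C * (1 - 1) ≤ 0 := by
    refine le_of_tendsto_of_tendsto hlower (tendsto_sub_one_mul_tsum_residueClass h) ?_
    filter_upwards [Ioc_mem_nhdsGT (by norm_num : (1 : ℝ) < 2)] with x hx
    have hx1 : 0 < x - 1 := by linarith [hx.1]
    calc (q.totient : ℝ)⁻¹ - C * (x - 1)
        = (x - 1) * ((q.totient : ℝ)⁻¹ / (x - 1) - C) := by field_simp
      _ ≤ _ := mul_le_mul_of_nonneg_left (hC hx) hx1.le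
  have hpos : 0 < (q.totient : ℝ)⁻¹ := inv_pos.mpr (mod_cast q.totient.pos_of_neZero)
  linarith

end PrimesInProgressions

section PadicEmbeddings

variable {l : ℕ} [Fact l.Prime] {K : Type*} [Field K]

instance henselianLocalRing_padicInt : HenselianLocalRing ℤ_[l] where
  is_henselian f hf a₀ h₁ h₂ :=
    HenselianRing.is_henselian (I := IsLocalRing.maximalIdeal ℤ_[l]) f hf a₀ h₁
      (h₂.map (Ideal.Quotient.mk _))

lemma exists_padicInt_root {F : ℤ[X]} (hF : F.Monic) {r : ZMod l} (h₀ : aeval r F = 0)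
    (h₁ : aeval r (derivative F) ≠ 0) :
    ∃ z : ℤ_[l], aeval z F = 0 ∧ PadicInt.toZMod z = r := by
  have hcomp : (PadicInt.toZMod (p := l)).comp (algebraMap ℤ ℤ_[l]) = algebraMap ℤ (ZMod l) :=
    RingHom.ext_int _ _
  have henselian := ((HenselianLocalRing.TFAE ℤ_[l]).out 0 2 rfl rfl).mp
  obtain ⟨z, hz, hzr⟩ := henselian inferInstance
    (PadicInt.toZMod (p := l)) (ZMod.ringHom_surjective _) (F.map (algebraMap ℤ ℤ_[l])) (hF.map _) r
    (by rwa [eval₂_map, hcomp]) (by rwa [derivative_map, eval₂_map, hcomp])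
  exact ⟨z, by rwa [IsRoot.def, eval_map_algebraMap] at hz, hzr⟩

lemma adjoin_eq_top_of_irreducible {k : Type*} [Field k] [Algebra k K] [FiniteDimensional k K]
    {F : k[X]} (hF : Irreducible F) {x : K} (hx : aeval x F = 0)
    (hdeg : F.natDegree = Module.finrank k K) : Algebra.adjoin k {x} = ⊤ := by
  have hmin : (minpoly k x).natDegree = Module.finrank k K := by
    rw [← minpoly.eq_of_irreducible hF hx, natDegree_mul_leadingCoeff_inv _ hF.ne_zero, hdeg]
  rw [← IntermediateField.adjoin_simple_toSubalgebra_of_isAlgebraic (.of_finite k x),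
    (Field.primitive_element_iff_minpoly_natDegree_eq k x).mpr hmin,
    IntermediateField.top_toSubalgebra]

theorem exists_ringHom_padic [NumberField K] {F : ℤ[X]} (hF : F.Monic)
    (hirr : Irreducible (F.map (algebraMap ℤ ℚ))) {x : K} (hx : aeval x F = 0)
    (hdeg : F.natDegree = Module.finrank ℚ K) {r : ZMod l} (h₀ : aeval r F = 0)
    (h₁ : aeval r (derivative F) ≠ 0) :
    ∃ (φ : K →+* ℚ_[l]) (z : ℤ_[l]), φ x = z ∧ PadicInt.toZMod z = r := by
  obtain ⟨z, hz, hzr⟩ := exists_padicInt_root hF h₀ h₁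
  have hxℚ : aeval x (F.map (algebraMap ℤ ℚ)) = 0 := by rwa [aeval_map_algebraMap]
  let B := PowerBasis.ofAdjoinEqTop (.of_finite ℚ x)
    (adjoin_eq_top_of_irreducible hirr hxℚ (by rwa [hF.natDegree_map]))
  have hB : B.gen = x := PowerBasis.ofAdjoinEqTop_gen _ _
  have hroot : aeval (z : ℚ_[l]) (minpoly ℚ B.gen) = 0 := by
    rw [hB, ← minpoly.eq_of_irreducible_of_monic hirr hxℚ (hF.map _), aeval_map_algebraMap]
    exact (aeval_algebraMap_apply ℚ_[l] z F).trans (by rw [hz, map_zero])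
  exact ⟨(B.lift _ hroot : K →ₐ[ℚ] ℚ_[l]), z,
    (congrArg (B.lift _ hroot) hB.symm).trans (B.lift_gen _ hroot), hzr⟩

/-- The restriction of an `l`-adic embedding of a number field to the rings of integers. -/
noncomputable def integersPadicHom (φ : K →+* ℚ_[l]) : 𝓞 K →+* ℤ_[l] :=
  (φ.comp (algebraMap (𝓞 K) K)).codRestrict (PadicInt.subring l) fun x ↦ by
    have hx : IsIntegral ℤ_[l] (φ (x : K)) :=
      ((x.2 : IsIntegral ℤ (x : K)).map φ.toIntAlgHom).tower_top
    obtain ⟨y, hy⟩ := IsIntegrallyClosed.isIntegral_iff.mp hx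
    change ‖φ (x : K)‖ ≤ 1
    exact hy ▸ y.2

lemma absNorm_ker_ringHom_zmod [NumberField K] (f : 𝓞 K →+* ZMod l) :
    Ideal.absNorm (RingHom.ker f) = l := by
  rw [Ideal.absNorm_apply, Submodule.cardQuot_apply, Nat.card_congr
    (RingHom.quotientKerEquivOfSurjective (ZMod.ringHom_surjective f)).toEquiv, Nat.card_zmod]

end PadicEmbeddings

section Counting

open Filter

variable {X : Type*} {N : X → ℕ} {M : ℕ} {g : ℕ → ℕ → X}

lemma sum_div_le_ncard_norm_le (hfin : ∀ s, {x | N x ≤ s}.Finite) {T : Finset ℕ}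
    (hg : ∀ l ∈ T, ∀ j, N (g l j) ≤ M * l * (j + 1))
    (hinj : ∀ l ∈ T, ∀ l' ∈ T, ∀ j j', g l j = g l' j' → l = l' ∧ j = j')
    {s : ℕ} (hs : ∀ l ∈ T, l ∣ s) :
    ∑ l ∈ T, s / l ≤ {x | N x ≤ M * s}.ncard := by
  classical
  have hsub : ((T.sigma fun l ↦ Finset.range (s / l)).image fun x ↦ g x.1 x.2 : Set X) ⊆
      {x | N x ≤ M * s} := by
    intro _ hx
    obtain ⟨⟨l, j⟩, hlj, rfl⟩ := Finset.mem_image.mp (Finset.mem_coe.mp hx)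
    obtain ⟨hl, hj⟩ := Finset.mem_sigma.mp hlj
    calc N (g l j) ≤ M * l * (j + 1) := hg l hl j
      _ ≤ M * l * (s / l) := by gcongr; exact Finset.mem_range.mp hj
      _ = M * s := by rw [mul_assoc, Nat.mul_div_cancel' (hs l hl)]
  have hcard := Set.ncard_le_ncard hsub (hfin _)
  rw [Set.ncard_coe_finset, Finset.card_image_of_injOn, Finset.card_sigma] at hcard
  · simpa only [Finset.card_range] using hcard
  · rintro ⟨l, j⟩ hlj ⟨l', j'⟩ hlj' h
    obtain ⟨rfl, rfl⟩ := hinj l (Finset.mem_sigma.mp hlj).1 l' (Finset.mem_sigma.mp hlj').1 j j' h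
    rfl

/-- If `X` has `O(s)` elements of norm at most `s`, then a family of elements `g l j` of norm at
most `M * l * (j + 1)` contributes `s / l` elements of norm at most `M * s` for each `l`. -/
lemma summable_one_div_of_injective_of_norm_le {C : ℝ} (hfin : ∀ s, {x | N x ≤ s}.Finite)
    (hC : ∀ᶠ s : ℕ in atTop, ({x | N x ≤ s}.ncard : ℝ) ≤ C * s)
    {S : Set ℕ} (hS : ∀ l ∈ S, 0 < l) (hM : 0 < M)
    (hg : ∀ l ∈ S, ∀ j, N (g l j) ≤ M * l * (j + 1))
    (hinj : ∀ l ∈ S, ∀ l' ∈ S, ∀ j j', g l j = g l' j' → l = l' ∧ j = j') :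
    Summable (S.indicator fun l ↦ (1 / l : ℝ)) := by
  classical
  refine summable_of_sum_le (c := C * M)
    (fun l ↦ Set.indicator_nonneg (fun _ _ ↦ by positivity) l) fun T₀ ↦ ?_
  rw [← Finset.sum_filter_of_ne (p := (· ∈ S)) fun l _ hl ↦ Set.mem_of_indicator_ne_zero hl]
  set T := T₀.filter (· ∈ S)
  have hTS : ∀ l ∈ T, l ∈ S := fun l hl ↦ (Finset.mem_filter.mp hl).2
  obtain ⟨s₀, hCs⟩ := eventually_atTop.mp hC
  set s := (s₀ + 1) * ∏ l ∈ T, l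
  have hprod : 0 < ∏ l ∈ T, l := Finset.prod_pos fun l hl ↦ hS l (hTS l hl)
  have hs : (0 : ℝ) < s := by exact_mod_cast Nat.mul_pos s₀.succ_pos hprod
  have hdvd : ∀ l ∈ T, l ∣ s := fun l hl ↦ (Finset.dvd_prod_of_mem _ hl).mul_left _
  refine le_of_mul_le_mul_left ?_ hs
  calc (s : ℝ) * ∑ l ∈ T, S.indicator (fun l ↦ (1 / l : ℝ)) l
      = ((∑ l ∈ T, s / l : ℕ) : ℝ) := by
        rw [Finset.mul_sum, Nat.cast_sum]
        refine Finset.sum_congr rfl fun l hl ↦ ?_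
        rw [Set.indicator_of_mem (hTS l hl), mul_one_div,
          Nat.cast_div (hdvd l hl) (by exact_mod_cast (hS l (hTS l hl)).ne')]
    _ ≤ ({x | N x ≤ M * s}.ncard : ℝ) := by
        exact_mod_cast sum_div_le_ncard_norm_le hfin (fun l hl ↦ hg l (hTS l hl))
          (fun l hl l' hl' ↦ hinj l (hTS l hl) l' (hTS l' hl')) hdvd
    _ ≤ C * (M * s : ℕ) := hCs _ <| (s₀.le_succ.trans (Nat.le_mul_of_pos_right _ hprod)).trans
        (Nat.le_mul_of_pos_left _ hM)
    _ = s * (C * M) := by push_cast; ring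

end Counting

section SplitPrimes

open Filter

variable {K : Type*} [Field K] [NumberField K] {P Q : ℕ → Ideal (𝓞 K)}

variable (K) in
lemma exists_eventually_ncard_absNorm_le :
    ∃ C : ℝ, ∀ᶠ s : ℕ in atTop, ({I : Ideal (𝓞 K) | Ideal.absNorm I ≤ s}.ncard : ℝ) ≤ C * s := by
  have hlim := (NumberField.Ideal.tendsto_norm_le_div_atTop K).comp tendsto_natCast_atTop_atTop
  obtain ⟨C, hC⟩ := hlim.isBoundedUnder_le
  refine ⟨C, ?_⟩
  filter_upwards [Filter.eventually_map.mp hC, eventually_gt_atTop 0] with s hs hs0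
  simp only [Function.comp_apply, Nat.cast_le] at hs
  rwa [div_le_iff₀ (by exact_mod_cast hs0)] at hs

lemma absNorm_prod_map_primeFactorsList {k : ℕ} (hk : k ≠ 0)
    (hP : ∀ l ∈ k.primeFactorsList, Ideal.absNorm (P l) = l) :
    Ideal.absNorm (k.primeFactorsList.map P).prod = k := by
  rw [map_list_prod, List.map_map,
    List.map_congr_left (g := id) (by simpa only [Function.comp_apply, id] using hP), List.map_id,
    Nat.prod_primeFactorsList hk]

lemma eq_of_dvd_of_absNorm_prime {I J : Ideal (𝓞 K)} (h : I ∣ J) (hI : (Ideal.absNorm I).Prime)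
    (hJ : (Ideal.absNorm J).Prime) : I = J := by
  have hnorm := (Nat.prime_dvd_prime_iff_eq hI hJ).mp (map_dvd Ideal.absNorm h)
  obtain ⟨A, rfl⟩ := h
  rw [map_mul] at hnorm
  rw [Ideal.absNorm_eq_one_iff.mp ((Nat.mul_eq_left hI.ne_zero).mp hnorm.symm), Ideal.mul_top]

lemma eq_of_mul_eq_mul_of_absNorm_prime {I I' A A' : Ideal (𝓞 K)} (h : A * I = A' * I')
    (hI : (Ideal.absNorm I).Prime) (hI' : (Ideal.absNorm I').Prime) (hA' : ¬ I ∣ A') : I = I' :=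
  have hprime : Prime I := (Ideal.irreducible_of_irreducible_absNorm hI).prime
  eq_of_dvd_of_absNorm_prime
    ((hprime.dvd_or_dvd (h ▸ dvd_mul_left I A)).resolve_left hA') hI hI'

lemma summable_one_div_of_ne_primeIdeals {M : ℕ} (hM : 0 < M) {S : Set ℕ}
    (hS : ∀ l ∈ S, l.Prime) (hP : ∀ l, l.Prime → ¬ l ∣ M → Ideal.absNorm (P l) = l)
    (hQ : ∀ l ∈ S, Ideal.absNorm (Q l) = l) (hPQ : ∀ l ∈ S, Q l ≠ P l) :
    Summable (S.indicator fun l ↦ (1 / l : ℝ)) := by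
  let J : ℕ → Ideal (𝓞 K) := fun j ↦ ((1 + M * j).primeFactorsList.map P).prod
  have hfactor : ∀ j, ∀ l ∈ (1 + M * j).primeFactorsList, l.Prime ∧ Ideal.absNorm (P l) = l := by
    intro j l hl
    have hlp := Nat.prime_of_mem_primeFactorsList hl
    refine ⟨hlp, hP l hlp fun h ↦ hlp.one_lt.ne' (Nat.dvd_one.mp ?_)⟩
    exact (Nat.dvd_add_left (h.mul_right j)).mp (Nat.dvd_of_mem_primeFactorsList hl)
  have hJ (j : ℕ) : Ideal.absNorm (J j) = 1 + M * j :=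
    absNorm_prod_map_primeFactorsList (by omega) fun l hl ↦ (hfactor j l hl).2
  have hQp : ∀ l ∈ S, (Ideal.absNorm (Q l)).Prime := fun l hl ↦ (hQ l hl).symm ▸ hS l hl
  have hndvd : ∀ l ∈ S, ∀ j, ¬ Q l ∣ J j := by
    intro l hl j hd
    obtain ⟨_, hmem, hd⟩ :=
      (Ideal.irreducible_of_irreducible_absNorm (hQp l hl)).prime.dvd_prod_iff.mp hd
    obtain ⟨l', hl', rfl⟩ := List.mem_map.mp hmem
    obtain ⟨hlp', hnorm⟩ := hfactor j l' hl'
    have heq := eq_of_dvd_of_absNorm_prime hd (hQp l hl) (hnorm.symm ▸ hlp')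
    obtain rfl : l = l' := by rw [← hQ l hl, heq, hnorm]
    exact hPQ l hl heq
  obtain ⟨C, hC⟩ := exists_eventually_ncard_absNorm_le K
  refine summable_one_div_of_injective_of_norm_le (g := fun l j ↦ J j * Q l)
    Ideal.finite_setOfPred_absNorm_le hC (fun l hl ↦ (hS l hl).pos) hM (fun l hl j ↦ ?_) ?_
  · rw [map_mul, hJ, hQ l hl, mul_right_comm]
    gcongr
    nlinarith
  · intro l hl l' hl' j j' h
    have hQQ := eq_of_mul_eq_mul_of_absNorm_prime h (hQp l hl) (hQp l' hl') (hndvd l hl j')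
    obtain rfl : l = l' := by rw [← hQ l hl, hQQ, hQ l' hl']
    have hJJ : J j = J j' := mul_right_cancel₀
      (Ideal.irreducible_of_irreducible_absNorm (hQp l hl)).ne_zero h
    have hjj : 1 + M * j = 1 + M * j' := by rw [← hJ, hJJ, hJ]
    exact ⟨rfl, Nat.eq_of_mul_eq_mul_left hM (Nat.add_left_cancel hjj)⟩

end SplitPrimes

section Nonresidues

variable {l : ℕ} {K : Type*} [Field K]

lemma exists_ringHom_zmod [Fact l.Prime] [NumberField K] {F : ℤ[X]} (hF : F.Monic)
    (hirr : Irreducible (F.map (algebraMap ℤ ℚ))) {x : 𝓞 K} (hx : aeval x F = 0)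
    (hdeg : F.natDegree = Module.finrank ℚ K) {r : ZMod l} (h₀ : aeval r F = 0)
    (h₁ : aeval r (derivative F) ≠ 0) : ∃ f : 𝓞 K →+* ZMod l, f x = r := by
  have hx' : aeval (x : K) F = 0 := by rw [aeval_algebraMap_apply, hx, map_zero]
  obtain ⟨φ, z, hφ, hz⟩ := exists_ringHom_padic hF hirr hx' hdeg h₀ h₁
  refine ⟨PadicInt.toZMod.comp (integersPadicHom φ), ?_⟩
  rw [RingHom.comp_apply, ← hz]
  exact congrArg _ (PadicInt.ext hφ)

lemma exists_numberField_root {F : ℤ[X]} (hF : F.Monic)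
    (hirr : Irreducible (F.map (algebraMap ℤ ℚ))) :
    ∃ (K : Type) (_ : Field K) (_ : NumberField K) (x : 𝓞 K),
      aeval x F = 0 ∧ F.natDegree = Module.finrank ℚ K := by
  have : Fact (Irreducible (F.map (algebraMap ℤ ℚ))) := ⟨hirr⟩
  let K := AdjoinRoot (F.map (algebraMap ℤ ℚ))
  have : Module.Finite ℚ K := (hF.map _).finite_adjoinRoot
  have : CharZero K := charZero_of_injective_algebraMap (algebraMap ℚ K).injective
  have : NumberField K := ⟨⟩
  let θ : K := AdjoinRoot.root _
  have hθ : aeval θ F = 0 := by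
    rw [← aeval_map_algebraMap ℚ]
    exact (AdjoinRoot.aeval_eq _).trans AdjoinRoot.mk_self
  refine ⟨K, inferInstance, this, ⟨θ, F, hF, hθ⟩, ?_, ?_⟩
  · exact RingOfIntegers.ext ((aeval_algebraMap_apply K _ F).symm.trans hθ)
  · rw [← hF.natDegree_map (algebraMap ℤ ℚ)]
    exact (finrank_quotient_span_eq_natDegree (f := F.map (algebraMap ℤ ℚ))).symm

theorem summable_one_div_of_two_simple_roots {F : ℤ[X]} (hF : F.Monic)
    (hirr : Irreducible (F.map (algebraMap ℤ ℚ))) {M : ℕ} (hM : 0 < M) {S : Set ℕ}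
    (hS : ∀ l ∈ S, l.Prime ∧ ¬ l ∣ M)
    (hroot : ∀ l, l.Prime → ¬ l ∣ M →
      ∃ r : ZMod l, aeval r F = 0 ∧ aeval r (derivative F) ≠ 0)
    (hroot' : ∀ l ∈ S, ∀ r : ZMod l, aeval r F = 0 →
      ∃ r' ≠ r, aeval r' F = 0 ∧ aeval r' (derivative F) ≠ 0) :
    Summable (S.indicator fun l ↦ (1 / l : ℝ)) := by
  obtain ⟨K, _, _, x, hx, hdeg⟩ := exists_numberField_root hF hirr
  have hex : ∀ l, ∃ P Q : Ideal (𝓞 K), (l.Prime → ¬ l ∣ M → Ideal.absNorm P = l) ∧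
      (l ∈ S → Ideal.absNorm Q = l ∧ Q ≠ P) := by
    intro l
    by_cases hl : l.Prime ∧ ¬ l ∣ M
    · have : Fact l.Prime := ⟨hl.1⟩
      obtain ⟨r, h₀, h₁⟩ := hroot l hl.1 hl.2
      obtain ⟨f, hf⟩ := exists_ringHom_zmod hF hirr hx hdeg h₀ h₁
      by_cases hlS : l ∈ S
      · obtain ⟨r', hne, h₀', h₁'⟩ := hroot' l hlS r h₀
        obtain ⟨g, hg⟩ := exists_ringHom_zmod hF hirr hx hdeg h₀' h₁'
        exact ⟨RingHom.ker f, RingHom.ker g, fun _ _ ↦ absNorm_ker_ringHom_zmod f,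
          fun _ ↦ ⟨absNorm_ker_ringHom_zmod g,
            fun h ↦ hne (by rw [← hf, ← hg, ZMod.ringHom_eq_of_ker_eq _ _ h])⟩⟩
      · exact ⟨RingHom.ker f, ⊥, fun _ _ ↦ absNorm_ker_ringHom_zmod f, fun h ↦ absurd h hlS⟩
    · exact ⟨⊥, ⊥, fun h h' ↦ absurd ⟨h, h'⟩ hl, fun h ↦ absurd (hS l h) hl⟩
  choose P Q hP hQ using hex
  exact summable_one_div_of_ne_primeIdeals hM (fun l hl ↦ (hS l hl).1) hP
    (fun l hl ↦ (hQ l hl).1) fun l hl ↦ (hQ l hl).2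

lemma exists_pow_eq_one_and_ne_one {p l : ℕ} (hp : p.Prime) [Fact l.Prime]
    (h : (l : ZMod p) = 1) : ∃ ζ : ZMod l, ζ ^ p = 1 ∧ ζ ≠ 1 := by
  have : Fact p.Prime := ⟨hp⟩
  have hdvd : p ∣ Fintype.card (ZMod l)ˣ := by
    rw [ZMod.card_units]
    rw [← Nat.cast_one, ZMod.natCast_eq_natCast_iff] at h
    exact (Nat.modEq_iff_dvd' (Fact.out : l.Prime).one_lt.le).mp h.symm
  obtain ⟨ζ, hζ⟩ := exists_prime_orderOf_dvd_card p hdvd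
  refine ⟨ζ, ?_, fun h ↦ ?_⟩
  · rw [← Units.val_pow_eq_pow_val, ← hζ, pow_orderOf_eq_one, Units.val_one]
  · rw [Units.val_eq_one.mp h, orderOf_one] at hζ
    exact hp.one_lt.ne hζ

lemma exists_pow_eq_and_ne {p : ℕ} (hp : p.Prime) [Fact l.Prime] (hl : (l : ZMod p) = 1)
    {x : ZMod l} (hx : x ≠ 0) : ∃ y ≠ x, y ^ p = x ^ p := by
  obtain ⟨ζ, hζ, hζ1⟩ := exists_pow_eq_one_and_ne_one hp hl
  exact ⟨ζ * x, fun h ↦ hζ1 (mul_right_cancel₀ hx (h.trans (one_mul x).symm)),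
    by rw [mul_pow, hζ, one_mul]⟩

lemma aeval_X_pow_sub_C_eq_zero_and_derivative_ne_zero {p : ℕ} {m : ℤ} [Fact l.Prime]
    (hp : (p : ZMod l) ≠ 0) (hm : (m : ZMod l) ≠ 0) {x : ZMod l} (hx : x ^ p = m) :
    aeval x (X ^ p - C m : ℤ[X]) = 0 ∧ aeval x (derivative (X ^ p - C m : ℤ[X])) ≠ 0 := by
  have hp0 : p ≠ 0 := fun h ↦ hp (by simp [h])
  have hx0 : x ≠ 0 := fun h ↦ hm (by rw [← hx, h, zero_pow hp0])
  exact ⟨by simp [hx], by simp [derivative_X_pow, hp, hx0]⟩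

/-- If every prime `l > B` had a `p`-th root of `m` modulo `l`, then the primes `l ≡ 1 [MOD p]`
would have at least two primes of norm `l` above them in `ℚ(m^(1/p))`. -/
theorem exists_prime_gt_forall_pow_ne {p : ℕ} (hp : p.Prime) {m : ℤ}
    (hm : ∀ b : ℚ, b ^ p ≠ m) (B : ℕ) :
    ∃ l > B, l.Prime ∧ ∀ x : ZMod l, x ^ p ≠ m := by
  by_contra! hroots
  have hm0 : m ≠ 0 := fun h ↦ hm 0 (by simp [h, hp.ne_zero])
  have hirr : Irreducible ((X ^ p - C m : ℤ[X]).map (algebraMap ℤ ℚ)) := by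
    simpa using X_pow_sub_C_irreducible_of_prime hp hm
  set M := p * m.natAbs * B.factorial
  have hM : 0 < M := by have := hp.pos; positivity
  have hsimple : ∀ l : ℕ, l.Prime → ¬ l ∣ M → ∀ x : ZMod l, x ^ p = m →
      aeval x (X ^ p - C m : ℤ[X]) = 0 ∧ aeval x (derivative (X ^ p - C m : ℤ[X])) ≠ 0 := by
    intro l hl hlM x
    have : Fact l.Prime := ⟨hl⟩
    refine aeval_X_pow_sub_C_eq_zero_and_derivative_ne_zero (fun h ↦ hlM ?_) fun h ↦ hlM ?_
    · exact (((ZMod.natCast_eq_zero_iff p l).mp h).mul_right _).mul_right _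
    · rw [ZMod.intCast_zmod_eq_zero_iff_dvd] at h
      exact ((Int.natCast_dvd.mp h).mul_left _).mul_right _
  have hsum : Summable ({l : ℕ | (l.Prime ∧ (l : ZMod p) = 1) ∧ ¬ l ∣ M}.indicator
      fun l ↦ (1 / l : ℝ)) := by
    refine summable_one_div_of_two_simple_roots (monic_X_pow_sub_C m hp.ne_zero) hirr hM
      (fun l hl ↦ ⟨hl.1.1, hl.2⟩) (fun l hl hlM ↦ ?_) fun l ⟨hl, hlM⟩ r hr ↦ ?_
    · have hlB : B < l := not_le.mp fun h ↦ hlM ((hl.dvd_factorial.mpr h).mul_left _)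
      exact (hroots l hlB hl).imp (hsimple l hl hlM)
    · have : Fact l.Prime := ⟨hl.1⟩
      have hr0 : r ≠ 0 := by
        rintro rfl
        refine (hsimple l hl.1 hlM 0 (by simpa [sub_eq_zero] using hr)).2 ?_
        simp [derivative_X_pow, Nat.sub_ne_zero_of_lt hp.one_lt]
      obtain ⟨y, hy, hyr⟩ := exists_pow_eq_and_ne hp hl.2 hr0
      have hr' : r ^ p = m := by simpa [sub_eq_zero] using hr
      exact ⟨y, hy, hsimple l hl.1 hlM y (hyr.trans hr')⟩
  have : NeZero p := ⟨hp.ne_zero⟩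
  refine not_summable_one_div_primes_eq_mod (q := p) isUnit_one (hsum.congr_cofinite ?_)
  filter_upwards [M.divisors.finite_toSet.compl_mem_cofinite] with l hl
  have hl' : ¬ l ∣ M := fun h ↦ hl (by simpa [hM.ne'] using h)
  simp [Set.indicator, hl']

end Nonresidues

section DetectingPowers

variable {ι : Type*} [Fintype ι] {q : ι → ℕ} {p M : ℕ}

/-- The primes dividing `M` detect `p`-th powers among the monomials in the `q i`: a monomial that
is a `p`-th power modulo each of them has exponents divisible by `p`. -/
def DetectsPowers (q : ι → ℕ) (p M : ℕ) : Prop :=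
  ∀ v : ι → ℤ, (∀ (l : ℕ) [Fact l.Prime], l ∣ M →
    ∃ s : ZMod l, s ^ p = ∏ i, (q i : ZMod l) ^ v i) → ∀ i, (p : ℤ) ∣ v i

lemma DetectsPowers.mono (h : DetectsPowers q p M) {M' : ℕ} (hM : M ∣ M') :
    DetectsPowers q p M' :=
  fun v hv ↦ h v fun l _ hl ↦ hv l (hl.trans hM)

lemma factorization_prod_pow_of_injective (hq : ∀ i, (q i).Prime) (hinj : Function.Injective q)
    (w : ι → ℕ) (i : ι) : (∏ j, q j ^ w j).factorization (q i) = w i := by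
  classical
  rw [Nat.factorization_prod_apply fun j _ ↦ pow_ne_zero _ (hq j).ne_zero]
  simp only [(hq _).factorization_pow, Finsupp.single_apply, hinj.eq_iff]
  simp

lemma dvd_of_pow_eq_prod_pow (hq : ∀ i, (q i).Prime) (hinj : Function.Injective q)
    {w : ι → ℕ} {b : ℚ} (h : b ^ p = ∏ i, (q i : ℚ) ^ w i) (i : ι) : p ∣ w i := by
  have : Fact (q i).Prime := ⟨hq i⟩
  have hval := congrArg (padicValRat (q i)) h
  rw [← factorization_prod_pow_of_injective hq hinj w i, Nat.factorization_def _ (hq i),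
    ← Int.natCast_dvd_natCast, ← padicValRat.of_nat]
  push_cast
  rw [← hval, padicValRat.pow]
  exact dvd_mul_right _ _

lemma exists_prime_gt_forall_pow_ne_prod (hq : ∀ i, (q i).Prime) (hinj : Function.Injective q)
    (hp : p.Prime) {w : ι → ℕ} (hw : ¬ ∀ i, p ∣ w i) (B : ℕ) :
    ∃ l > B, l.Prime ∧ ∀ x : ZMod l, x ^ p ≠ ∏ i, (q i : ZMod l) ^ w i := by
  have hne (b : ℚ) : b ^ p ≠ ((∏ i, q i ^ w i : ℕ) : ℤ) := fun h ↦
    hw fun i ↦ dvd_of_pow_eq_prod_pow hq hinj (by simpa using h) i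
  simpa using exists_prime_gt_forall_pow_ne hp hne B

lemma exists_pow_eq_prod_emod {l : ℕ} [Fact l.Prime] (hql : ∀ i, (q i : ZMod l) ≠ 0)
    {v : ι → ℤ} {s : ZMod l} (hs : s ^ p = ∏ i, (q i : ZMod l) ^ v i) :
    ∃ x : ZMod l, x ^ p = ∏ i, (q i : ZMod l) ^ (v i % p) := by
  refine ⟨s / ∏ i, (q i : ZMod l) ^ (v i / p), ?_⟩
  rw [div_pow, hs, ← Finset.prod_pow, ← Finset.prod_div_distrib]
  refine Finset.prod_congr rfl fun i _ ↦ ?_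
  rw [← zpow_natCast, ← zpow_mul, ← zpow_sub₀ (hql i), Int.emod_def, mul_comm (p : ℤ)]

lemma exists_coprime_detectsPowers (hq : ∀ i, (q i).Prime) (hinj : Function.Injective q)
    (hp : p.Prime) {N : ℕ} (hN : N ≠ 0) : ∃ M : ℕ, M.Coprime N ∧ DetectsPowers q p M := by
  classical
  set B := N * ∏ i, q i
  have hB : B ≠ 0 := mul_ne_zero hN (Finset.prod_ne_zero_iff.mpr fun i _ ↦ (hq i).ne_zero)
  have hex (w : ι → ℕ) : ∃ l > B, l.Prime ∧
      ((∀ x : ZMod l, x ^ p ≠ ∏ i, (q i : ZMod l) ^ w i) ∨ ∀ i, p ∣ w i) := by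
    by_cases hw : ∀ i, p ∣ w i
    · obtain ⟨l, hlB, hl⟩ := Nat.exists_infinite_primes (B + 1)
      exact ⟨l, hlB, hl, .inr hw⟩
    · obtain ⟨l, hlB, hl, hne⟩ := exists_prime_gt_forall_pow_ne_prod hq hinj hp hw B
      exact ⟨l, hlB, hl, .inl hne⟩
  choose l hlB hl hlw using hex
  have hcop (w) : (l w).Coprime B := Nat.coprime_of_lt_prime hB (hlB w) (hl w)
  refine ⟨∏ w ∈ Fintype.piFinset fun _ ↦ Finset.range p, l w,
    Nat.Coprime.prod_left fun w _ ↦ (hcop w).coprime_dvd_right (dvd_mul_right _ _),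
    fun v hv ↦ ?_⟩
  have hp0 : (p : ℤ) ≠ 0 := mod_cast hp.ne_zero
  choose w hw using fun i ↦ Int.eq_ofNat_of_zero_le (Int.emod_nonneg (v i) hp0)
  have hwp (i) : w i < p := by
    have hlt := Int.emod_lt_of_pos (v i) (mod_cast hp.pos : (0 : ℤ) < p)
    rwa [hw i, Int.ofNat_lt] at hlt
  have : Fact (l w).Prime := ⟨hl w⟩
  have hql (i) : (q i : ZMod (l w)) ≠ 0 := fun h ↦ (hl w).ne_one <|
    Nat.eq_one_of_dvd_coprimes (hcop w) dvd_rfl (((ZMod.natCast_eq_zero_iff _ _).mp h).trans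
      ((Finset.dvd_prod_of_mem q (Finset.mem_univ i)).mul_left N))
  obtain ⟨s, hs⟩ := hv (l w) (Finset.dvd_prod_of_mem l (by simpa using hwp))
  obtain ⟨x, hx⟩ := exists_pow_eq_prod_emod hql hs
  have hpw : ∀ i, p ∣ w i := (hlw w).resolve_left fun h ↦ h x <| by
    rw [hx]
    simp only [hw, zpow_natCast]
  exact fun i ↦ (EuclideanDomain.dvd_mod_iff dvd_rfl).mp <| by
    rw [hw i]
    exact Int.natCast_dvd_natCast.mpr (hpw i)

lemma exists_coprime_forall_detectsPowers (hq : ∀ i, (q i).Prime) (hinj : Function.Injective q)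
    {N : ℕ} (hN : N ≠ 0) (n : ℕ) :
    ∃ M : ℕ, M.Coprime N ∧ ∀ p ∈ n.primeFactors, DetectsPowers q p M := by
  choose! M hMN hM using fun p (hp : p ∈ n.primeFactors) ↦
    exists_coprime_detectsPowers hq hinj (Nat.prime_of_mem_primeFactors hp) hN
  exact ⟨∏ p ∈ n.primeFactors, M p, Nat.Coprime.prod_left hMN,
    fun p hp ↦ (hM p hp).mono (Finset.dvd_prod_of_mem M hp)⟩

lemma exists_prime_gt_coprime_mul_sub_one {n : ℕ} (hodd : Odd n) (B : ℕ) :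
    ∃ l > B, l.Prime ∧ (l * (l - 1)).Coprime n := by
  obtain ⟨l, hlB, hl, hmod⟩ := Nat.forall_exists_prime_gt_and_modEq B (q := n) (a := 2)
    hodd.pos.ne' (Nat.coprime_two_left.mpr hodd)
  have hmod' : l - 1 ≡ 1 [MOD n] :=
    Nat.ModEq.add_right_cancel' 1 (by rwa [Nat.sub_add_cancel hl.one_le])
  refine ⟨l, hlB, hl, Nat.Coprime.mul_left ?_ ?_⟩
  · rw [Nat.coprime_iff_gcd_eq_one, hmod.gcd_eq]
    exact Nat.coprime_two_left.mpr hodd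
  · rw [Nat.coprime_iff_gcd_eq_one, hmod'.gcd_eq, Nat.gcd_one_left]

end DetectingPowers

section Rank

variable {ι κ : Type*} [Fintype ι] [Fintype κ]

lemma exists_embedding_repr_eq_zero {V : Submodule ℤ (ι → ℤ)} {k s : ℕ}
    (snf : Module.Basis.SmithNormalForm V ι k) (hs : s + k ≤ Fintype.card ι) :
    ∃ j : Fin s ↪ ι, ∀ w ∈ V, ∀ i, snf.bM.repr w (j i) = 0 := by
  classical
  have hcard : Fintype.card (Fin s) ≤ ((Finset.univ.map snf.f)ᶜ).card := by
    rw [Finset.card_compl, Finset.card_map, Finset.card_univ, Fintype.card_fin, Fintype.card_fin]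
    omega
  obtain ⟨j⟩ := Function.Embedding.nonempty_of_card_le (hcard.trans_eq (Fintype.card_coe _).symm)
  refine ⟨j.trans (.subtype _), fun w hw i ↦
    snf.repr_eq_zero_of_notMem_range (i := j i) ⟨w, hw⟩ ?_⟩
  rintro ⟨m, hm⟩
  exact Finset.mem_compl.mp (j i).2 (hm ▸ Finset.mem_map_of_mem _ (Finset.mem_univ m))

lemma exists_addMonoidHom_zmod_pi {A : Type*} [AddCommGroup A] {n : ℕ} {a : κ → A}
    (ha : ∀ i, n • a i = 0) :
    ∃ φ : (κ → ZMod n) →+ A, ∀ z : κ → ℤ, φ (fun i ↦ z i) = ∑ i, z i • a i := by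
  let ψ (i : κ) : ZMod n →+ A := ZMod.lift n ⟨zmultiplesHom A (a i), by simpa using ha i⟩
  exact ⟨∑ i, (ψ i).comp (Pi.evalAddMonoidHom _ i), fun z ↦ by simp [ψ]⟩

lemma hasZModRankGE_of_relations_le {A : Type*} [CommGroup A] {n s : ℕ} {a : ι → A}
    (ha : ∀ i, a i ^ n = 1) {V : Submodule ℤ (ι → ℤ)}
    (hs : s + Module.finrank ℤ V ≤ Fintype.card ι)
    (hV : ∀ f : ι → ℤ, ∏ i, a i ^ f i = 1 → ∃ w ∈ V, ∀ i, (n : ℤ) ∣ (f - w) i) :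
    HasZModRankGE A n s := by
  obtain ⟨k, snf⟩ := Submodule.smithNormalForm (Pi.basisFun ℤ ι) V
  obtain ⟨j, hj⟩ := exists_embedding_repr_eq_zero (s := s) snf <| by
    rwa [Module.finrank_eq_card_basis snf.bN, Fintype.card_fin] at hs
  let c : (ι → ℤ) →ₗ[ℤ] Additive A := Fintype.linearCombination ℤ fun i ↦ .ofMul (a i)
  have hc (f) : c f = .ofMul (∏ i, a i ^ f i) := by simp [c, Fintype.linearCombination_apply]
  have hnc (f) : n • c f = 0 := by
    rw [hc, ← ofMul_pow, ← Finset.prod_pow, ofMul_eq_zero]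
    exact Finset.prod_eq_one fun i _ ↦ by
      rw [← zpow_natCast, zpow_comm, zpow_natCast, ha, one_zpow]
  obtain ⟨φ, hφ⟩ := exists_addMonoidHom_zmod_pi fun i ↦ hnc (snf.bM (j i))
  refine ⟨AddMonoidHom.toMultiplicativeLeft φ, (injective_iff_map_eq_zero φ).mpr fun x hx ↦ ?_⟩
  choose z hz using fun i ↦ ZMod.intCast_surjective (x i)
  obtain rfl : (fun i ↦ (z i : ZMod n)) = x := funext hz
  set f := ∑ i, z i • snf.bM (j i) with hf
  have hcf : c f = 0 := by rw [← hx, hφ, hf, map_sum]; simp only [map_smul]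
  obtain ⟨w, hwV, hdvd⟩ := hV f (by rwa [hc, ofMul_eq_zero] at hcf)
  choose u hu using hdvd
  have hfw : f - w = (n : ℤ) • u := funext hu
  ext i
  have hfi : snf.bM.repr f (j i) = z i := by
    classical
    simp only [hf, map_sum, map_smul, Module.Basis.repr_self, Finsupp.finsetSum_apply,
      Finsupp.smul_apply, Finsupp.single_apply, j.injective.eq_iff]
    simp
  have hrepr := congrArg (snf.bM.repr · (j i)) hfw
  simp only [map_sub, map_smul, Finsupp.sub_apply, Finsupp.smul_apply, hj w hwV i, hfi, sub_zero]
    at hrepr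
  simp [hrepr]

lemma exists_submodule_finrank_le_card {R M : Type*} [CommRing R] [IsDomain R]
    [IsPrincipalIdealRing R] [AddCommGroup M] [Module R M] (H : Submodule R (M × (κ → R))) :
    ∃ V : Submodule R M, Module.finrank R V ≤ Fintype.card κ ∧
      ∀ f t, (f, t) ∈ H → ∃ w ∈ V, (f - w, 0) ∈ H := by
  let π : H →ₗ[R] H.map (.snd R M (κ → R)) := (LinearMap.snd R M (κ → R)).submoduleMap H
  obtain ⟨σ, hσ⟩ := π.exists_rightInverse_of_surjective <|
    LinearMap.range_eq_top.mpr (LinearMap.submoduleMap_surjective _ H)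
  let τ := LinearMap.fst R M (κ → R) ∘ₗ H.subtype ∘ₗ σ
  refine ⟨LinearMap.range τ, ?_, fun f t hft ↦ ?_⟩
  · exact (LinearMap.finrank_range_le τ).trans ((Submodule.finrank_le _).trans_eq (by simp))
  · let r : H.map (.snd R M (κ → R)) := π ⟨(f, t), hft⟩
    refine ⟨τ r, ⟨r, rfl⟩, ?_⟩
    have hr : (σ r : M × (κ → R)).2 = t :=
      congrArg Subtype.val (LinearMap.congr_fun hσ r)
    have hsub : (f - τ r, 0) = (f, t) - (σ r : M × (κ → R)) := by
      ext1
      · rfl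
      · rw [Prod.snd_sub, hr, sub_self]
    exact hsub ▸ H.sub_mem hft (σ r).2

lemma hasZModRankGE_of_pow_independent {A G : Type*} [CommGroup A] [CommGroup G] {n s : ℕ}
    {a : ι → A} (ha : ∀ i, a i ^ n = 1) {α : ι → G} {ε : κ → G}
    (hα : ∀ (f : ι → ℤ) (β : G), ∏ i, α i ^ f i = β ^ n → ∀ i, (n : ℤ) ∣ f i)
    (hrel : ∀ f : ι → ℤ, ∏ i, a i ^ f i = 1 →
      ∃ (t : κ → ℤ) (β : G), ∏ i, α i ^ f i = β ^ n * ∏ k, ε k ^ t k)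
    (hs : s + Fintype.card κ ≤ Fintype.card ι) : HasZModRankGE A n s := by
  let H : Submodule ℤ ((ι → ℤ) × (κ → ℤ)) :=
    (LinearMap.range ((n : ℤ) • LinearMap.id (M := Additive G))).comap
      ((Fintype.linearCombination ℤ fun i ↦ Additive.ofMul (α i)).coprod
        (-Fintype.linearCombination ℤ fun k ↦ Additive.ofMul (ε k)))
  have hH (f t) : (f, t) ∈ H ↔ ∃ β : G, ∏ i, α i ^ f i = β ^ n * ∏ k, ε k ^ t k := by
    simp only [← div_eq_iff_eq_mul]
    simp [H, Fintype.linearCombination_apply, ← sub_eq_add_neg, ← ofMul_zpow, ← ofMul_prod,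
      ← ofMul_div, eq_comm, Additive.exists, ← ofMul_pow]
  obtain ⟨V, hVcard, hV⟩ := exists_submodule_finrank_le_card H
  refine hasZModRankGE_of_relations_le ha (V := V) (by omega) fun f hf ↦ ?_
  obtain ⟨t, ht⟩ := hrel f hf
  obtain ⟨w, hwV, hw⟩ := hV f t ((hH f t).mpr ht)
  obtain ⟨β, hβ⟩ := (hH _ _).mp hw
  exact ⟨w, hwV, hα _ β (by simpa using hβ)⟩

end Rank

section ClassGroup

open nonZeroDivisors

variable {ι R K : Type*} [Fintype ι] [CommRing R] [Field K] [Algebra R K] [IsFractionRing R K]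

lemma classGroup_mk_eq_one_iff_mem_range [IsDomain R] {I : (FractionalIdeal R⁰ K)ˣ} :
    ClassGroup.mk K I = 1 ↔ I ∈ (toPrincipalIdeal R K).range := by
  rw [← (ClassGroup.equiv K).map_eq_one_iff, ClassGroup.equiv_mk]
  simp

lemma exists_units_map_eq_of_toPrincipalIdeal_eq_one {w : Kˣ} (hw : toPrincipalIdeal R K w = 1) :
    ∃ u : Rˣ, Units.map (algebraMap R K : R →* K) u = w := by
  have hmem {v : Kˣ} (hv : toPrincipalIdeal R K v = 1) : ∃ r : R, algebraMap R K r = v := by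
    have h := FractionalIdeal.mem_spanSingleton_self R⁰ (v : K)
    rwa [(toPrincipalIdeal_eq_iff).mp hv, Units.val_one, FractionalIdeal.mem_one_iff] at h
  obtain ⟨r, hr⟩ := hmem hw
  obtain ⟨r', hr'⟩ := hmem (v := w⁻¹) (by rw [map_inv, hw, inv_one])
  have hrr' : r * r' = 1 := FaithfulSMul.algebraMap_injective R K (by simp [hr, hr'])
  exact ⟨.mkOfMulEqOne r r' hrr', Units.ext hr⟩

lemma exists_unit_mul_pow_of_prod_mk_eq_one [IsDomain R] {n : ℕ} {α : ι → Kˣ}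
    {I : ι → (FractionalIdeal R⁰ K)ˣ} (hI : ∀ i, I i ^ n = toPrincipalIdeal R K (α i))
    {f : ι → ℤ} (hf : ∏ i, ClassGroup.mk K (I i) ^ f i = 1) :
    ∃ (u : Rˣ) (β : Kˣ), ∏ i, α i ^ f i = Units.map (algebraMap R K : R →* K) u * β ^ n := by
  obtain ⟨β, hβ⟩ : ∏ i, I i ^ f i ∈ (toPrincipalIdeal R K).range := by
    rw [← classGroup_mk_eq_one_iff_mem_range, map_prod]
    simpa only [map_zpow] using hf
  have hβn : toPrincipalIdeal R K ((∏ i, α i ^ f i) / β ^ n) = 1 := by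
    rw [_root_.map_div, map_pow, hβ, map_prod, ← Finset.prod_pow, div_eq_one]
    exact Finset.prod_congr rfl fun i _ ↦ by
      rw [map_zpow, ← hI, ← zpow_natCast, ← zpow_natCast, zpow_comm]
  obtain ⟨u, hu⟩ := exists_units_map_eq_of_toPrincipalIdeal_eq_one hβn
  exact ⟨u, β, by rw [hu, div_mul_cancel]⟩

lemma exists_fractionalIdeal_pow_eq [IsDedekindDomain R] {n : ℕ} (hn : n ≠ 0) {a : R}
    {J : Ideal R} (hJ : J ^ n = Ideal.span {a}) {w : Kˣ} (hw : algebraMap R K a = w) :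
    ∃ I : (FractionalIdeal R⁰ K)ˣ, I ^ n = toPrincipalIdeal R K w := by
  have hJ₀ : J ≠ 0 := by
    rintro rfl
    rw [zero_pow hn, eq_comm, Ideal.zero_eq_bot, Ideal.span_singleton_eq_bot] at hJ
    exact w.ne_zero (by rw [← hw, hJ, map_zero])
  refine ⟨FractionalIdeal.mk0 K ⟨J, mem_nonZeroDivisors_of_ne_zero hJ₀⟩, Units.ext ?_⟩
  rw [coe_toPrincipalIdeal, Units.val_pow_eq_pow_val, FractionalIdeal.coe_mk0,
    ← FractionalIdeal.coeIdeal_pow, hJ, FractionalIdeal.coeIdeal_span_singleton, hw]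

lemma hasZModRankGE_classGroup [NumberField K] {n s : ℕ}
    (htors : ∀ ζ ∈ Units.torsion K, ∃ ξ : (𝓞 K)ˣ, ξ ^ n = ζ) {α : ι → Kˣ}
    {I : ι → (FractionalIdeal (𝓞 K)⁰ K)ˣ} (hI : ∀ i, I i ^ n = toPrincipalIdeal (𝓞 K) K (α i))
    (hα : ∀ (f : ι → ℤ) (β : Kˣ), ∏ i, α i ^ f i = β ^ n → ∀ i, (n : ℤ) ∣ f i)
    (hs : s + Units.rank K ≤ Fintype.card ι) :
    HasZModRankGE (ClassGroup (𝓞 K)) n s := by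
  let U : (𝓞 K)ˣ →* Kˣ := Units.map (algebraMap (𝓞 K) K : 𝓞 K →* K)
  refine hasZModRankGE_of_pow_independent (κ := Fin (Units.rank K))
    (a := fun i ↦ ClassGroup.mk K (I i)) (ε := fun k ↦ U (Units.fundSystem K k))
    (fun i ↦ ?_) hα (fun f hf ↦ ?_) (by simpa using hs)
  · rw [← map_pow, hI, classGroup_mk_eq_one_iff_mem_range]
    exact ⟨α i, rfl⟩
  · obtain ⟨u, β, hβ⟩ := exists_unit_mul_pow_of_prod_mk_eq_one hI hf
    obtain ⟨⟨⟨ζ, hζ⟩, t⟩, hu, -⟩ := Units.exist_unique_eq_mul_prod K u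
    obtain ⟨ξ, rfl⟩ := htors ζ hζ
    refine ⟨t, U ξ * β, ?_⟩
    rw [hβ, hu]
    simp only [U, map_mul, map_pow, map_prod, map_zpow, mul_pow]
    exact mul_right_comm _ _ _

end ClassGroup

section GroupOfOrderSix

variable {G : Type*} [Group G]

open Nat in
theorem mulEquiv_perm_of_normalCore_eq_bot {H : Subgroup G} (hcore : H.normalCore = ⊥)
    (hcard : Nat.card G = (H.index)!) : Nonempty (G ≃* Equiv.Perm (Fin H.index)) := by
  have : Finite G := Nat.finite_of_card_ne_zero (hcard ▸ factorial_ne_zero _)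
  have hinj : Function.Injective (MulAction.toPermHom G (G ⧸ H)) := by
    rwa [← MonoidHom.ker_eq_bot_iff, ← Subgroup.normalCore_eq_ker]
  have hbij : Function.Bijective (MulAction.toPermHom G (G ⧸ H)) :=
    (Nat.bijective_iff_injective_and_card _).mpr ⟨hinj, by rw [hcard, Nat.card_perm]; rfl⟩
  exact ⟨(MulEquiv.ofBijective _ hbij).trans (Finite.equivFin (G ⧸ H)).permCongrHom⟩

lemma normalCore_zpowers_eq_bot {a b : G} (ha : orderOf a = 2) (hab : a * b ≠ b * a) :
    (Subgroup.zpowers a).normalCore = ⊥ := by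
  have hmem (g : G) (hg : g ∈ Subgroup.zpowers a) : g = 1 ∨ g = a := by
    obtain ⟨k, rfl⟩ := hg
    obtain hk | hk := Int.emod_two_eq_zero_or_one k <;>
      simp [← zpow_mod_orderOf a k, ha, hk]
  refine (Subgroup.eq_bot_iff_forall _).mpr fun g hg ↦ ?_
  obtain rfl | rfl := hmem g (Subgroup.normalCore_le _ hg)
  · rfl
  · obtain h | h := hmem (b * g * b⁻¹) (hg b)
    · exact conj_eq_one_iff.mp h
    · exact absurd (mul_inv_eq_iff_eq_mul.mp h).symm hab

theorem mulEquiv_perm_fin_three_of_card_eq_six (hG : Nat.card G = 6) {a b : G}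
    (ha : orderOf a = 2) (hab : a * b ≠ b * a) : Nonempty (G ≃* Equiv.Perm (Fin 3)) := by
  have hindex : (Subgroup.zpowers a).index = 3 := by
    have := (Subgroup.zpowers a).index_mul_card
    rw [Nat.card_zpowers, ha, hG] at this
    lia
  rw [← hindex]
  exact mulEquiv_perm_of_normalCore_eq_bot (normalCore_zpowers_eq_bot ha hab)
    (by rw [hG, hindex]; rfl)

end GroupOfOrderSix

section Sextic

lemma dvd_natDegree_of_forall_irreducible {k : Type*} [Field k] {d : ℕ} {f : k[X]}
    (h : ∀ g : k[X], Irreducible g → g ∣ f → d ∣ g.natDegree) : d ∣ f.natDegree := by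
  induction f using WfDvdMonoid.induction_on_irreducible with
  | zero => simp
  | unit u hu => simp [natDegree_eq_zero_of_isUnit hu]
  | mul a i ha hi ih =>
    rw [natDegree_mul hi.ne_zero ha]
    exact (h i hi (dvd_mul_right i a)).add (ih fun g hg hga ↦ h g hg (hga.mul_left i))

lemma two_dvd_natDegree_of_forall_not_isRoot {f : ℝ[X]} (hf : ∀ r, ¬ f.IsRoot r) :
    2 ∣ f.natDegree := by
  refine dvd_natDegree_of_forall_irreducible fun g hg hgf ↦ ?_
  have hdeg : g.natDegree ≠ 1 := fun h ↦ by
    obtain ⟨r, hr⟩ :=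
      exists_root_of_degree_eq_one ((degree_eq_iff_natDegree_eq_of_pos one_pos).mpr h)
    exact hf r (hr.dvd hgf)
  have := hg.natDegree_pos
  have := hg.natDegree_le_two
  lia

/-- The sextic `x⁶ + 3x⁵ + Ax⁴ + (2A - 5)x³ + Ax² + 3x + 1`; the theorem concerns
`A = (yⁿ - 127)/36`. -/
noncomputable def sextic (A : ℤ) : ℤ[X] :=
  X ^ 6 + C 3 * X ^ 5 + C A * X ^ 4 + C (2 * A - 5) * X ^ 3 + C A * X ^ 2 + C 3 * X + 1

variable {A : ℤ}

lemma natDegree_sextic (A : ℤ) : (sextic A).natDegree = 6 := by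
  unfold sextic; compute_degree!

lemma monic_sextic (A : ℤ) : (sextic A).Monic := by
  unfold sextic; monicity!

lemma aeval_sextic {R : Type*} [CommRing R] (A : ℤ) (x : R) :
    aeval x (sextic A) = (x ^ 2 + x + 1) ^ 3 + ((A : R) - 6) * (x ^ 2 * (x + 1) ^ 2) := by
  simp only [sextic, map_add, map_mul, map_pow, aeval_X, aeval_C, map_one]
  simp only [eq_intCast]
  push_cast
  ring

lemma aeval_derivative_sextic {R : Type*} [CommRing R] (A : ℤ) (x : R) :
    aeval x (derivative (sextic A)) =
      (2 * x + 1) * (3 * (x ^ 2 + x + 1) ^ 2 + ((A : R) - 6) * (2 * x * (x + 1))) := by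
  simp only [sextic, map_ofNat, eq_intCast, derivative_X_pow_succ, derivative_mul,
    derivative_ofNat, derivative_intCast, derivative_X, derivative_one, map_add, map_mul, map_pow,
    map_zero, map_one, map_sub, aeval_X, map_intCast, Nat.cast_ofNat, Nat.cast_one]
  norm_num
  ring

lemma aeval_sextic_pos (hA : 6 ≤ A) (r : ℝ) : 0 < aeval r (sextic A) := by
  rw [aeval_sextic]
  have hquad : 0 < r ^ 2 + r + 1 := by nlinarith [sq_nonneg (r + 1 / 2)]
  have hA' : (0 : ℝ) ≤ A - 6 := sub_nonneg.mpr (by exact_mod_cast hA)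
  positivity

lemma two_dvd_natDegree_of_dvd_sextic (hA : 6 ≤ A) {f : ℤ[X]} (hf : f.Monic) (hdvd : f ∣ sextic A) :
    2 ∣ f.natDegree := by
  rw [← hf.natDegree_map (algebraMap ℤ ℝ)]
  refine two_dvd_natDegree_of_forall_not_isRoot fun r hr ↦ (aeval_sextic_pos hA r).ne' ?_
  rw [IsRoot.def, eval_map_algebraMap] at hr
  obtain ⟨g, hg⟩ := hdvd
  rw [hg, map_mul, hr, zero_mul]

lemma map_sextic_zmod_two (hA : Odd A) :
    (sextic A).map (algebraMap ℤ (ZMod 2)) = cyclotomic 7 (ZMod 2) := by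
  have : Fact (Nat.Prime 7) := ⟨by norm_num⟩
  have hA' : (A : ZMod 2) = 1 := ZMod.intCast_eq_one_iff_odd.mpr hA
  have h3 : (3 : ZMod 2) = 1 := rfl
  have h25 : (2 * 1 - 5 : ZMod 2) = 1 := rfl
  simp only [sextic, cyclotomic_prime, Finset.sum_range_succ, Finset.sum_range_zero,
    Polynomial.map_add, Polynomial.map_mul, Polynomial.map_pow, Polynomial.map_one, map_X, map_C,
    algebraMap_int_eq, Int.coe_castRingHom, Int.cast_sub, Int.cast_mul, Int.cast_ofNat, hA', h3,
    h25, C_1]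
  ring

lemma three_dvd_natDegree_of_dvd_sextic (hA : Odd A) {f : ℤ[X]} (hf : f.Monic)
    (hdvd : f ∣ sextic A) : 3 ∣ f.natDegree := by
  have hdvd' := Polynomial.map_dvd (algebraMap ℤ (ZMod 2)) hdvd
  rw [map_sextic_zmod_two hA] at hdvd'
  have horder : orderOf (ZMod.unitOfCoprime (2 ^ 1) (by norm_num : Nat.Coprime (2 ^ 1) 7)) = 3 :=
    orderOf_eq_prime (by decide) (by decide)
  rw [← hf.natDegree_map (algebraMap ℤ (ZMod 2))]
  refine dvd_natDegree_of_forall_irreducible fun g hg hgf ↦ ?_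
  rw [natDegree_of_dvd_cyclotomic_of_irreducible (p := 2) (f := 1) (by simp) (by norm_num)
    (hgf.trans hdvd') hg, horder]

theorem irreducible_sextic (hA : 6 ≤ A) (hodd : Odd A) : Irreducible (sextic A) := by
  have hdeg {f : ℤ[X]} (hf : f.Monic) (hdvd : f ∣ sextic A) : 6 ∣ f.natDegree :=
    Nat.Coprime.mul_dvd_of_dvd_of_dvd (by norm_num) (two_dvd_natDegree_of_dvd_sextic hA hf hdvd)
      (three_dvd_natDegree_of_dvd_sextic hodd hf hdvd)
  refine (monic_sextic A).irreducible_iff_natDegree.mpr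
    ⟨fun h ↦ by simpa [h] using natDegree_sextic A, fun f g hf hg hfg ↦ ?_⟩
  have hsum : f.natDegree + g.natDegree = 6 := by
    rw [← hf.natDegree_mul hg, hfg, natDegree_sextic]
  have := hdeg hf (hfg ▸ dvd_mul_right f g)
  lia

theorem irreducible_map_sextic (hA : 6 ≤ A) (hodd : Odd A) :
    Irreducible ((sextic A).map (algebraMap ℤ ℚ)) :=
  (monic_sextic A).irreducible_iff_irreducible_map_fraction_map.mp (irreducible_sextic hA hodd)

end Sextic

section SexticRoots

variable {A : ℤ}

section CommRing

variable {R : Type*} [CommRing R] {x : R}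

lemma isUnit_of_aeval_sextic (hx : aeval x (sextic A) = 0) : IsUnit x := by
  rw [aeval_sextic] at hx
  exact .of_mul_eq_one (-(x ^ 5 + 3 * x ^ 4 + A * x ^ 3 + (2 * A - 5) * x ^ 2 + A * x + 3))
    (by linear_combination -hx)

lemma aeval_sextic_neg_one_sub (A : ℤ) (x : R) :
    aeval (-1 - x) (sextic A) = aeval x (sextic A) := by
  simp only [aeval_sextic]
  ring

lemma isUnit_add_one_of_aeval_sextic (hx : aeval x (sextic A) = 0) : IsUnit (x + 1) := by
  rw [← aeval_sextic_neg_one_sub] at hx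
  simpa [add_comm] using! (isUnit_of_aeval_sextic hx).neg

end CommRing

variable {K : Type*} [Field K] {x : K}

lemma aeval_sextic_inv (hx : aeval x (sextic A) = 0) : aeval x⁻¹ (sextic A) = 0 := by
  have h₀ := (isUnit_of_aeval_sextic hx).ne_zero
  rw [aeval_sextic] at hx ⊢
  field_simp
  linear_combination hx

lemma map_sextic_eq_prod [CharZero K] (hx : aeval x (sextic A) = 0) :
    (sextic A).map (algebraMap ℤ K) = (X - C x) * (X - C x⁻¹) * (X - C (-1 - x)) *
      (X - C (-1 - x)⁻¹) * (X - C (-1 - x⁻¹)) * (X - C (-1 - x⁻¹)⁻¹) := by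
  have h₀ := (isUnit_of_aeval_sextic hx).ne_zero
  have h₁ := (isUnit_add_one_of_aeval_sextic hx).ne_zero
  have hneg : (-1 - x)⁻¹ = -1 / (x + 1) := by
    rw [inv_eq_iff_eq_inv]; field_simp; ring
  have hinv : (-1 - x⁻¹)⁻¹ = -x / (x + 1) := by
    rw [inv_eq_iff_eq_inv]; field_simp; ring
  rw [aeval_sextic] at hx
  have hA : (A : K) - 6 = -(x ^ 2 + x + 1) ^ 3 / (x ^ 2 * (x + 1) ^ 2) := by
    field_simp; linear_combination hx
  refine Polynomial.funext fun r ↦ ?_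
  simp only [eval_map_algebraMap, aeval_sextic, eval_mul, eval_sub, eval_X, eval_C, hneg, hinv, hA]
  field_simp
  ring

lemma sq_add_add_one_ne_zero [CharZero K] (hA : A ≠ 6) (hx : aeval x (sextic A) = 0) :
    x ^ 2 + x + 1 ≠ 0 := fun h ↦ by
  have h₀ := (isUnit_of_aeval_sextic hx).ne_zero
  have h₁ := (isUnit_add_one_of_aeval_sextic hx).ne_zero
  have hA' : (A : K) - 6 ≠ 0 := sub_ne_zero.mpr (by exact_mod_cast hA)
  rw [aeval_sextic, h] at hx
  exact mul_ne_zero hA' (mul_ne_zero (pow_ne_zero 2 h₀) (pow_ne_zero 2 h₁))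
    (by simpa using! hx)

theorem totallyImaginary_of_aeval_sextic (hA : 6 ≤ A) (hx : aeval x (sextic A) = 0) :
    TotallyImaginary K := fun φ ↦ by
  refine ⟨x, fun h ↦ (aeval_sextic_pos hA (φ x).re).ne' (Complex.ofReal_injective ?_)⟩
  have hreal : ((φ x).re : ℂ) = φ x := Complex.conj_eq_iff_re.mp (Complex.conj_eq_iff_im.mpr h)
  rw [Complex.ofReal_zero, ← map_zero φ, ← hx, aeval_sextic, aeval_sextic]
  push_cast
  simp [hreal, map_ofNat]

end SexticRoots

section TotallyImaginary

variable {K : Type*} [Field K]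

lemma isTotallyComplex_of_totallyImaginary (hK : TotallyImaginary K) : IsTotallyComplex K where
  isComplex v := by
    rw [← InfinitePlace.not_isReal_iff_isComplex, InfinitePlace.isReal_iff]
    intro hv
    obtain ⟨x, hx⟩ := hK v.embedding
    have := DFunLike.congr_fun (ComplexEmbedding.isReal_iff.mp hv) x
    exact hx (Complex.conj_eq_iff_im.mp this)

lemma two_mul_rank_add_one_eq_finrank [NumberField K] [IsTotallyComplex K] :
    2 * (Units.rank K + 1) = Module.finrank ℚ K := by
  rw [Units.rank, Nat.sub_add_cancel Fintype.card_pos, IsTotallyComplex.finrank,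
    InfinitePlace.card_eq_nrRealPlaces_add_nrComplexPlaces,
    IsTotallyComplex.nrRealPlaces_eq_zero, zero_add]

end TotallyImaginary

section SexticField

variable {A : ℤ} {K : Type*} [Field K] [NumberField K] {x : K}

lemma aeval_map_sextic (hx : aeval x (sextic A) = 0) :
    aeval x ((sextic A).map (algebraMap ℤ ℚ)) = 0 := by
  rwa [aeval_map_algebraMap]

lemma minpoly_eq_map_sextic (hA : 6 ≤ A) (hodd : Odd A) (hx : aeval x (sextic A) = 0) :
    minpoly ℚ x = (sextic A).map (algebraMap ℤ ℚ) :=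
  (minpoly.eq_of_irreducible_of_monic (irreducible_map_sextic hA hodd) (aeval_map_sextic hx)
    ((monic_sextic A).map _)).symm

variable (hdeg : Module.finrank ℚ K = 6)
include hdeg

lemma adjoin_eq_top_of_aeval_sextic (hA : 6 ≤ A) (hodd : Odd A) (hx : aeval x (sextic A) = 0) :
    Algebra.adjoin ℚ {x} = ⊤ :=
  adjoin_eq_top_of_irreducible (irreducible_map_sextic hA hodd) (aeval_map_sextic hx)
    (by rw [(monic_sextic A).natDegree_map, natDegree_sextic, hdeg])

theorem isSplittingField_map_sextic (hA : 6 ≤ A) (hodd : Odd A) (hx : aeval x (sextic A) = 0) :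
    ((sextic A).map (algebraMap ℤ ℚ)).IsSplittingField ℚ K where
  splits' := by
    rw [Polynomial.map_map, ← IsScalarTower.algebraMap_eq, map_sextic_eq_prod hx]
    exact (((((Splits.X_sub_C _).mul (.X_sub_C _)).mul (.X_sub_C _)).mul (.X_sub_C _)).mul
      (.X_sub_C _)).mul (.X_sub_C _)
  adjoin_rootSet' := by
    rw [eq_top_iff, ← adjoin_eq_top_of_aeval_sextic hdeg hA hodd hx]
    refine Algebra.adjoin_mono (Set.singleton_subset_iff.mpr ?_)
    exact mem_rootSet.mpr ⟨((monic_sextic A).map _).ne_zero, aeval_map_sextic hx⟩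

theorem isGalois_of_aeval_sextic (hA : 6 ≤ A) (hodd : Odd A) (hx : aeval x (sextic A) = 0) :
    IsGalois ℚ K :=
  have := isSplittingField_map_sextic hdeg hA hodd hx
  .of_separable_splitting_field (irreducible_map_sextic hA hodd).separable

lemma exists_algEquiv_apply_eq (hA : 6 ≤ A) (hodd : Odd A) (hx : aeval x (sextic A) = 0)
    {w : K} (hw : aeval w (sextic A) = 0) : ∃ σ : K ≃ₐ[ℚ] K, σ x = w := by
  have := isGalois_of_aeval_sextic hdeg hA hodd hx
  refine isConjRoot_iff_exists_algEquiv.mp ?_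
  rw [IsConjRoot, minpoly_eq_map_sextic hA hodd hx, minpoly_eq_map_sextic hA hodd hw]

theorem algEquiv_mulEquiv_perm_of_aeval_sextic (hA : 6 < A) (hodd : Odd A)
    (hx : aeval x (sextic A) = 0) : Nonempty ((K ≃ₐ[ℚ] K) ≃* Equiv.Perm (Fin 3)) := by
  have := isGalois_of_aeval_sextic hdeg hA.le hodd hx
  obtain ⟨σ, hσ⟩ := exists_algEquiv_apply_eq hdeg hA.le hodd hx (aeval_sextic_inv hx)
  obtain ⟨τ, hτ⟩ := exists_algEquiv_apply_eq hdeg hA.le hodd hx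
    ((aeval_sextic_neg_one_sub A x).trans hx)
  have hcomm : σ * τ ≠ τ * σ := fun h ↦ by
    have h₀ := (isUnit_of_aeval_sextic hx).ne_zero
    have h₁ := (isUnit_add_one_of_aeval_sextic hx).ne_zero
    have := DFunLike.congr_fun h x
    simp only [AlgEquiv.mul_apply, hσ, hτ, map_inv₀, map_sub, map_neg, map_one] at this
    have h₂ : -1 - x ≠ 0 := fun h ↦ h₁ (by linear_combination -h)
    field_simp at this
    exact sq_add_add_one_ne_zero hA.ne' hx (by linear_combination this)
  have hσ₂ : σ ^ 2 = 1 := by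
    have : ((σ ^ 2 : K ≃ₐ[ℚ] K) : K →ₐ[ℚ] K) = AlgHom.id ℚ K :=
      AlgHom.ext_of_adjoin_eq_top (adjoin_eq_top_of_aeval_sextic hdeg hA.le hodd hx)
        (by simp [Set.EqOn, pow_two, hσ])
    exact AlgEquiv.ext fun t ↦ DFunLike.congr_fun this t
  have hσ₁ : σ ≠ 1 := fun h ↦ hcomm (by rw [h, one_mul, mul_one])
  exact mulEquiv_perm_fin_three_of_card_eq_six (by rw [IsGalois.card_aut_eq_finrank, hdeg])
    (orderOf_eq_prime hσ₂ hσ₁) hcomm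

end SexticField

section VirtualUnits

variable {A : ℤ} {y n : ℕ}

section CommRing

variable {R S : Type*} [CommRing R] [CommRing S] {x : R}

/-- The pairs `(a, b)` for which `a * x + b` is one of the elements `virtualUnit x i`. -/
def virtualUnitCoeff : Fin 8 → ℤ × ℤ :=
  ![(1, -2), (1, 0), (1, 1), (1, 3), (2, -1), (3, 1), (2, 3), (3, 2)]

/-- Eight linear forms in `x`. When `x` is a root of `sextic A` and `36 * A + 127` is an `n`-th
power coprime to `840`, each of them generates the `n`-th power of an ideal of the ring of
integers. -/
def virtualUnit (x : R) (i : Fin 8) : R :=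
  (virtualUnitCoeff i).1 * x + (virtualUnitCoeff i).2

lemma map_virtualUnit (φ : R →+* S) (x : R) (i : Fin 8) :
    φ (virtualUnit x i) = virtualUnit (φ x) i := by
  simp [virtualUnit]

lemma prod_virtualUnit (hx : aeval x (sextic A) = 0) :
    ∏ i, virtualUnit x i = (36 * A + 127) * -(x * (x + 1)) ^ 3 := by
  have hprod : ∏ i, virtualUnit x i = (x - 2) * x * (x + 1) * (x + 3) * (2 * x - 1) *
      (3 * x + 1) * (2 * x + 3) * (3 * x + 2) := by
    simp [Fin.prod_univ_eight, virtualUnit, virtualUnitCoeff, sub_eq_add_neg]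
  rw [aeval_sextic] at hx
  linear_combination hprod + 36 * x * (x + 1) * hx

lemma isCoprime_linear {a b c d m : R} (hm : a * x + b ∣ m) (hdet : IsCoprime m (a * d - c * b)) :
    IsCoprime (a * x + b) (c * x + d) := by
  have h := (hdet.of_isCoprime_of_dvd_left hm).add_mul_left_right c
  exact .of_mul_right_right (y := a) (by convert! h using 1; ring)

lemma virtualUnitCoeff_det_dvd {i j : Fin 8} (hij : i ≠ j) :
    (virtualUnitCoeff i).1 * (virtualUnitCoeff j).2 -
      (virtualUnitCoeff j).1 * (virtualUnitCoeff i).2 ∣ 840 := by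
  revert i j
  decide

variable (hy : (y : ℤ) ^ n = 36 * A + 127)
include hy

lemma associated_prod_virtualUnit (hx : aeval x (sextic A) = 0) :
    Associated ((y : R) ^ n) (∏ i, virtualUnit x i) := by
  have hu : IsUnit (-(x * (x + 1)) ^ 3) :=
    (((isUnit_of_aeval_sextic hx).mul (isUnit_add_one_of_aeval_sextic hx)).pow 3).neg
  refine ⟨hu.unit, ?_⟩
  rw [prod_virtualUnit hx, IsUnit.unit_spec]
  congr 1
  exact_mod_cast congrArg (Int.cast : ℤ → R) hy

lemma isCoprime_virtualUnit (hcop : y.Coprime 840) (hx : aeval x (sextic A) = 0) {i j : Fin 8}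
    (hij : i ≠ j) : IsCoprime (virtualUnit x i) (virtualUnit x j) := by
  have hdvd : virtualUnit x i ∣ (y : R) ^ n :=
    (Finset.dvd_prod_of_mem _ (Finset.mem_univ i)).trans (associated_prod_virtualUnit hy hx).dvd'
  have hdet := (((Nat.isCoprime_iff_coprime.mpr hcop).pow_left (m := n)).of_isCoprime_of_dvd_right
    (virtualUnitCoeff_det_dvd hij)).map (Int.castRingHom R)
  exact isCoprime_linear hdvd (by simpa using hdet)

lemma exists_ideal_pow_eq_span_virtualUnit [IsDedekindDomain R] (hcop : y.Coprime 840)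
    (hx : aeval x (sextic A) = 0) (i : Fin 8) :
    ∃ J : Ideal R, J ^ n = Ideal.span {virtualUnit x i} := by
  obtain ⟨J, hJ⟩ := Finset.exists_eq_pow_of_mul_eq_pow_of_coprime (s := Finset.univ)
    (f := fun i ↦ Ideal.span {virtualUnit x i}) (c := Ideal.span {(y : R)}) (n := n)
    (fun i _ j _ hij ↦ (Ideal.isCoprime_span_singleton_iff _ _).mpr
      (isCoprime_virtualUnit hy hcop hx hij))
    (by rw [Ideal.prod_span_singleton, Ideal.span_singleton_pow,
      Ideal.span_singleton_eq_span_singleton]; exact (associated_prod_virtualUnit hy hx).symm)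
    i (Finset.mem_univ i)
  exact ⟨J, hJ.symm⟩

end CommRing

open nonZeroDivisors

variable {K : Type*} [Field K] {x : K}

lemma virtualUnit_ne_zero [CharZero K] (hy : (y : ℤ) ^ n = 36 * A + 127) (hy₀ : y ≠ 0)
    (hx : aeval x (sextic A) = 0) (i : Fin 8) : virtualUnit x i ≠ 0 := by
  have h := (associated_prod_virtualUnit hy hx).ne_zero_iff.mp
    (pow_ne_zero n (Nat.cast_ne_zero.mpr hy₀))
  exact Finset.prod_ne_zero_iff.mp h i (Finset.mem_univ i)

lemma exists_integer_aeval_sextic (hx : aeval x (sextic A) = 0) :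
    ∃ θ : 𝓞 K, (θ : K) = x ∧ aeval θ (sextic A) = 0 := by
  let θ : 𝓞 K := ⟨x, sextic A, monic_sextic A, by rwa [← aeval_def]⟩
  refine ⟨θ, rfl, FaithfulSMul.algebraMap_injective (𝓞 K) K ?_⟩
  rw [← aeval_algebraMap_apply, map_zero]
  exact hx

lemma exists_fractionalIdeal_pow_eq_virtualUnit [NumberField K] (hn : n ≠ 0)
    (hy : (y : ℤ) ^ n = 36 * A + 127) (hcop : y.Coprime 840) (hx : aeval x (sextic A) = 0)
    {α : Kˣ} {i : Fin 8} (hα : (α : K) = virtualUnit x i) :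
    ∃ I : (FractionalIdeal (𝓞 K)⁰ K)ˣ, I ^ n = toPrincipalIdeal (𝓞 K) K α := by
  obtain ⟨θ, rfl, hθ⟩ := exists_integer_aeval_sextic hx
  obtain ⟨J, hJ⟩ := exists_ideal_pow_eq_span_virtualUnit hy hcop hθ i
  exact exists_fractionalIdeal_pow_eq hn hJ ((map_virtualUnit (algebraMap (𝓞 K) K) θ i).trans
    hα.symm)

end VirtualUnits

section LocalTests

variable {l : ℕ} [Fact l.Prime]

lemma eq_one_of_pow_eq_one_of_ringHom_zmod {R : Type*} [CommRing R] [IsDomain R]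
    (f : R →+* ZMod l) {m : ℕ} (hm : (l * (l - 1)).Coprime m) {s : R} (hs : s ^ m = 1) :
    s = 1 := by
  have hfs : f s ^ m = 1 := by rw [← map_pow, hs, map_one]
  have hm₀ : m ≠ 0 := by
    rintro rfl
    exact (Fact.out : l.Prime).ne_one (Nat.eq_one_of_mul_eq_one_right (by simpa using hm))
  have hne : f s ≠ 0 := fun h ↦ by simp [h, hm₀] at hfs
  have hfs₁ : f s = 1 := by
    have hgcd := pow_gcd_eq_one.mpr ⟨ZMod.pow_card_sub_one_eq_one hne, hfs⟩
    rwa [hm.coprime_mul_left, pow_one] at hgcd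
  have hsum : ∑ k ∈ Finset.range m, s ^ k ≠ 0 := fun h ↦ by
    have := congrArg f h
    simp only [map_sum, map_pow, hfs₁, one_pow, Finset.sum_const, Finset.card_range, nsmul_one,
      map_zero, ZMod.natCast_eq_zero_iff] at this
    exact (Fact.out : l.Prime).one_lt.ne'
      (Nat.eq_one_of_dvd_coprimes hm.coprime_mul_right dvd_rfl this)
  have := geom_sum_mul s m
  rw [hs, sub_self] at this
  exact sub_eq_zero.mp ((mul_eq_zero.mp this).resolve_left hsum)

lemma eq_one_of_pow_eq_one_of_ringHom_padic {K : Type*} [Field K] (φ : K →+* ℚ_[l]) {m : ℕ}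
    (hm : (l * (l - 1)).Coprime m) (hm₀ : m ≠ 0) {s : K} (hs : s ^ m = 1) : s = 1 := by
  have hint : IsIntegral ℤ s := .of_pow (Nat.pos_of_ne_zero hm₀) (hs ▸ isIntegral_one)
  let t : 𝓞 K := ⟨s, hint⟩
  have ht : t = 1 := eq_one_of_pow_eq_one_of_ringHom_zmod
    (PadicInt.toZMod.comp (integersPadicHom φ)) hm (RingOfIntegers.ext hs)
  exact congrArg (algebraMap (𝓞 K) K) ht

lemma isUnit_of_toZMod_ne_zero {u : ℤ_[l]} (hu : PadicInt.toZMod u ≠ 0) : IsUnit u := by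
  by_contra h
  rw [← mem_nonunits_iff, ← IsLocalRing.mem_maximalIdeal, ← PadicInt.ker_toZMod] at h
  exact hu h

lemma exists_pow_eq_prod_toZMod {ι : Type*} [Fintype ι] {p : ℕ} (hp : p ≠ 0) {u : ι → ℤ_[l]}
    (hu : ∀ i, PadicInt.toZMod (u i) ≠ 0) {g : ι → ℤ} {γ : ℚ_[l]}
    (h : ∏ i, (u i : ℚ_[l]) ^ g i = γ ^ p) :
    ∃ s : ZMod l, s ^ p = ∏ i, PadicInt.toZMod (u i) ^ g i := by
  choose U hU using fun i ↦ isUnit_of_toZMod_ne_zero (hu i)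
  have hγ : ‖γ‖ = 1 := by
    rw [← pow_eq_one_iff_of_nonneg (norm_nonneg γ) hp, ← norm_pow, ← h, norm_prod]
    refine Finset.prod_eq_one fun i _ ↦ ?_
    rw [norm_zpow, ← hU, PadicInt.padic_norm_e_of_padicInt, PadicInt.norm_units, one_zpow]
  let G := PadicInt.mkUnits hγ
  have hG : ∏ i, U i ^ g i = G ^ p := by
    refine Units.map_injective (f := (PadicInt.Coe.ringHom (p := l) : ℤ_[l] →* ℚ_[l]))
      Subtype.val_injective (Units.ext ?_)
    simpa [map_prod, hU, G] using! h
  refine ⟨PadicInt.toZMod (G : ℤ_[l]), ?_⟩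
  have := congrArg (fun v ↦ (Units.map (PadicInt.toZMod (p := l) : ℤ_[l] →* ZMod l) v : ZMod l)) hG
  simpa [map_prod, hU] using! this.symm

end LocalTests

section PowerRelations

variable {K : Type*} [Field K] {x : K} {f : Fin 8 → ℤ} {p : ℕ}

/-- `f` is the exponent vector of a `p`-th power among the monomials in the elements
`virtualUnit x i`. -/
def IsPowerRelation (x : K) (p : ℕ) (f : Fin 8 → ℤ) : Prop :=
  ∃ β : K, ∏ i, virtualUnit x i ^ f i = β ^ p

lemma IsPowerRelation.add_smul {e : Fin 8 → ℤ} (hne : ∀ i, virtualUnit x i ≠ 0)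
    (hf : IsPowerRelation x p f) (he : IsPowerRelation x p e) (k : ℤ) :
    IsPowerRelation x p (f + k • e) := by
  obtain ⟨β, hβ⟩ := hf
  obtain ⟨γ, hγ⟩ := he
  refine ⟨β * γ ^ k, ?_⟩
  rw [mul_pow, ← hβ, ← zpow_natCast, zpow_comm, zpow_natCast, ← hγ, ← Finset.prod_zpow,
    ← Finset.prod_mul_distrib]
  refine Finset.prod_congr rfl fun i _ ↦ ?_
  rw [Pi.add_apply, Pi.smul_apply, smul_eq_mul, zpow_add₀ (hne i), mul_comm k, zpow_mul]

lemma isPowerRelation_of_pow_eq [CharZero K] {A : ℤ} {y n : ℕ} (hy : (y : ℤ) ^ n = 36 * A + 127)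
    (hy₀ : y ≠ 0) (hx : aeval x (sextic A) = 0) (hpn : p ∣ n) (hp : Odd p) :
    IsPowerRelation x p ![1, -2, -2, 1, 1, 1, 1, 1] := by
  obtain ⟨m, rfl⟩ := hpn
  refine ⟨-y ^ m, ?_⟩
  have hprod := prod_virtualUnit hx
  have h (i) := virtualUnit_ne_zero hy hy₀ hx i
  have h₁ : virtualUnit x 1 = x := by simp [virtualUnit, virtualUnitCoeff]
  have h₂ : virtualUnit x 2 = x + 1 := by simp [virtualUnit, virtualUnitCoeff]
  have hyK : (y : K) ^ (p * m) = 36 * A + 127 := by exact_mod_cast congrArg (Int.cast : ℤ → K) hy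
  rw [hp.neg_pow, ← pow_mul, mul_comm m, hyK]
  have hx₀ := h₁ ▸ h 1
  have hx₁ := h₂ ▸ h 2
  simp only [Fin.prod_univ_eight, h₁, h₂] at hprod ⊢
  simp only [Matrix.cons_val, Matrix.cons_val_zero, Matrix.cons_val_one, zpow_ofNat, pow_one,
    zpow_neg]
  field_simp
  exact mul_left_cancel₀ (mul_ne_zero hx₀ hx₁) (by linear_combination hprod)

lemma zpow_sum₀ {ι : Type*} {c : K} (hc : c ≠ 0) (s : Finset ι) (k : ι → ℤ) :
    c ^ (∑ i ∈ s, k i) = ∏ i ∈ s, c ^ k i := by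
  induction s using Finset.cons_induction with
  | empty => simp
  | cons i s hi ih => rw [Finset.sum_cons, Finset.prod_cons, zpow_add₀ hc, ih]

lemma IsPowerRelation.of_scaled_perm {x' c : K} (hf : IsPowerRelation x p f) {σ : Fin 8 → Fin 8}
    (hσ : σ.Bijective) {s : Fin 8 → K} (hs : ∀ i, s i ^ p = s i) {e : Fin 8 → ℤ} (hc : c ≠ 0)
    (h : ∀ i, virtualUnit x' i = s i * c ^ e i * virtualUnit x (σ i)) :
    ∃ β : K, ∏ i, virtualUnit x' i ^ f (σ i) = c ^ (∑ i, e i * f (σ i)) * β ^ p := by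
  obtain ⟨β, hβ⟩ := hf
  refine ⟨(∏ i, s i ^ f (σ i)) * β, ?_⟩
  have hsp : (∏ i, s i ^ f (σ i)) ^ p = ∏ i, s i ^ f (σ i) := by
    rw [← Finset.prod_pow]
    refine Finset.prod_congr rfl fun i _ ↦ ?_
    rw [← zpow_natCast, zpow_comm, zpow_natCast, hs]
  simp only [h, mul_zpow, Finset.prod_mul_distrib, ← zpow_mul, ← zpow_sum₀ hc]
  rw [mul_pow, hsp, ← hβ, hσ.prod_comp fun j ↦ virtualUnit x j ^ f j]
  ring

lemma IsPowerRelation.neg_one_sub (hf : IsPowerRelation x p f) (hp : Odd p) :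
    IsPowerRelation (-1 - x) p fun i ↦ f (![3, 2, 1, 0, 6, 7, 4, 5] i) := by
  obtain ⟨β, hβ⟩ := hf.of_scaled_perm (x' := -1 - x) (σ := ![3, 2, 1, 0, 6, 7, 4, 5])
    (by decide) (s := fun _ ↦ -1) (fun _ ↦ hp.neg_one_pow) (e := 0) one_ne_zero fun i ↦ by
      fin_cases i <;> simp [virtualUnit, virtualUnitCoeff] <;> ring
  exact ⟨β, by simpa using hβ⟩

lemma IsPowerRelation.exists_inv (hf : IsPowerRelation x p f) (hp : Odd p) (hx : x ≠ 0) :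
    ∃ g, IsPowerRelation x⁻¹ p g ∧ ∀ i ≠ 1, g i = f (![4, 1, 2, 5, 0, 3, 7, 6] i) := by
  obtain ⟨β, hβ⟩ := hf.of_scaled_perm (x' := x⁻¹) (σ := ![4, 1, 2, 5, 0, 3, 7, 6])
    (by decide) (s := ![-1, 1, 1, 1, -1, 1, 1, 1])
    (fun i ↦ by fin_cases i <;> simp [hp.neg_one_pow])
    (e := ![1, 2, 1, 1, 1, 1, 1, 1]) (inv_ne_zero hx) fun i ↦ by
      fin_cases i <;> simp [virtualUnit, virtualUnitCoeff] <;> field_simp <;> ring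
  set k := ∑ i, (![1, 2, 1, 1, 1, 1, 1, 1] : Fin 8 → ℤ) i * f (![4, 1, 2, 5, 0, 3, 7, 6] i)
  refine ⟨fun i ↦ f (![4, 1, 2, 5, 0, 3, 7, 6] i) - if i = 1 then k else 0, ⟨β, ?_⟩,
    fun i hi ↦ by simp [hi]⟩
  have h₁ : virtualUnit x⁻¹ 1 = x⁻¹ := by simp [virtualUnit, virtualUnitCoeff]
  rw [Fin.prod_univ_succAbove _ 1, h₁] at hβ ⊢
  simp only [Fin.succAbove_ne, if_true, if_false, sub_zero, zpow_sub₀ (inv_ne_zero hx)]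
  rw [div_mul_eq_mul_div, hβ, mul_div_cancel_left₀ _ (zpow_ne_zero _ (inv_ne_zero hx))]

end PowerRelations

section Independence

lemma isUnit_natCast_zmod_of_dvd_pow {l m k r : ℕ} (hl : l.Coprime m) (hr : r ∣ m ^ k) :
    IsUnit (r : ZMod l) :=
  (ZMod.isUnit_iff_coprime r l).mpr ((hl.pow_right k).coprime_dvd_right hr).symm

lemma dvd_of_prod_zpow_eq_pow {ι G : Type*} [Fintype ι] [CommGroup G] {α : ι → G} {n : ℕ}
    (hn : n ≠ 0) (htors : ∀ g : G, g ^ n = 1 → g = 1)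
    (hα : ∀ p ∈ n.primeFactors, ∀ (f : ι → ℤ) (β : G), ∏ i, α i ^ f i = β ^ p →
      ∀ i, (p : ℤ) ∣ f i) {d : ℕ} (hd : d ∣ n) {f : ι → ℤ} {β : G}
    (h : ∏ i, α i ^ f i = β ^ d) (i : ι) : (d : ℤ) ∣ f i := by
  induction d using induction_on_primes generalizing f β with
  | zero => exact absurd (zero_dvd_iff.mp hd) hn
  | one => simp
  | prime_mul p a hp ih =>
    have hpn : p ∣ n := dvd_of_mul_right_dvd hd
    choose g hg using hα p (hp.mem_primeFactors hpn hn) f (β ^ a) (by rw [h, mul_comm, pow_mul])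
    have hpow : (∏ i, α i ^ g i) ^ p = (β ^ a) ^ p := by
      rw [← pow_mul, mul_comm a, ← h, ← Finset.prod_pow]
      refine Finset.prod_congr rfl fun i _ ↦ ?_
      rw [hg i, mul_comm, zpow_mul, zpow_natCast]
    have hroot : ∏ i, α i ^ g i = β ^ a := by
      obtain ⟨m, rfl⟩ := hpn
      refine div_eq_one.mp (htors _ ?_)
      rw [pow_mul, div_pow, hpow, div_self', one_pow]
    rw [hg i, Nat.cast_mul]
    exact mul_dvd_mul_left _ (ih (dvd_of_mul_left_dvd hd) hroot)

lemma virtualUnit_two_succ_ne_zero {l : ℕ} [Fact l.Prime] (hl : l.Coprime 210) (i : Fin 7) :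
    virtualUnit (2 : ZMod l) i.succ ≠ 0 := by
  have hdvd : virtualUnit (2 : ℤ) i.succ ∣ 210 ^ 3 := by
    revert i
    decide
  have hunit : IsUnit ((210 ^ 3 : ℤ) : ZMod l) := by
    exact_mod_cast isUnit_natCast_zmod_of_dvd_pow (k := 3) hl dvd_rfl
  have := isUnit_of_dvd_unit (map_dvd (Int.castRingHom (ZMod l)) hdvd) hunit
  rw [← map_ofNat (Int.castRingHom (ZMod l)) 2, ← map_virtualUnit]
  exact this.ne_zero

lemma prod_virtualUnit_two_zpow {k : Type*} [Field k]
    (hne : ∀ i : Fin 7, virtualUnit (2 : k) i.succ ≠ 0) (f : Fin 8 → ℤ) :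
    ∏ i : Fin 7, virtualUnit (2 : k) i.succ ^ f i.succ = ∏ i, ((![2, 3, 5, 7] i : ℕ) : k) ^
      (![f 1 + 3 * f 7, f 2 + f 4, f 3, f 5 + f 6] i) := by
  have hval : (fun i : Fin 7 ↦ virtualUnit (2 : k) i.succ) = ![2, 3, 5, 3, 7, 7, 2 ^ 3] := by
    ext i
    fin_cases i <;> simp [virtualUnit, virtualUnitCoeff] <;> norm_num
  have h (i) := congrFun hval i
  simp only [h] at hne ⊢
  have h₂ : (2 : k) ≠ 0 := hne 0
  have h₃ : (3 : k) ≠ 0 := hne 1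
  have h₇ : (7 : k) ≠ 0 := hne 4
  simp only [Fin.prod_univ_seven, Fin.prod_univ_four, Fin.succ_zero_eq_one, Fin.succ_one_eq_two,
    Fin.reduceSucc, Matrix.cons_val, Matrix.cons_val_zero, Matrix.cons_val_one, Nat.cast_ofNat,
    zpow_add₀ h₂, zpow_add₀ h₃, zpow_add₀ h₇, zpow_mul, zpow_ofNat]
  ring

variable {A : ℤ} {K : Type*} [Field K] [NumberField K] {x : K} {y n M : ℕ}
  (hdeg : Module.finrank ℚ K = 6) (hA : 6 ≤ A) (hodd : Odd A) (hy : (y : ℤ) ^ n = 36 * A + 127)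
  (hn : n ≠ 0)
include hdeg hA hodd hy hn

lemma exists_ringHom_padic_two (hx : aeval x (sextic A) = 0) {l : ℕ} [Fact l.Prime]
    (hl : l.Coprime 210) (hly : l ∣ y) :
    ∃ (φ : K →+* ℚ_[l]) (z : ℤ_[l]), φ x = z ∧ PadicInt.toZMod z = 2 := by
  have hy₀ : (y : ZMod l) = 0 := (ZMod.natCast_eq_zero_iff y l).mpr hly
  have hAl : (36 * A + 127 : ZMod l) = 0 := by
    have := congrArg (Int.cast : ℤ → ZMod l) hy
    push_cast at this
    rw [← this, hy₀, zero_pow hn]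
  refine exists_ringHom_padic (monic_sextic A) (irreducible_map_sextic hA hodd) hx
    (by rw [natDegree_sextic, hdeg]) ?_ fun h ↦ ?_
  · rw [aeval_sextic]
    linear_combination hAl
  · rw [aeval_derivative_sextic] at h
    have h490 : ((490 : ℕ) : ZMod l) = 0 := by
      push_cast
      linear_combination 3 * h - 5 * hAl
    exact (isUnit_natCast_zmod_of_dvd_pow (k := 2) hl (by norm_num)).ne_zero h490

lemma dvd_of_isPowerRelation_of_apply_zero_eq_zero (hM : M.Coprime 210) (hMy : M ∣ y)
    {p : ℕ} (hp : p ≠ 0) (hdet : DetectsPowers ![2, 3, 5, 7] p M) (hx : aeval x (sextic A) = 0)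
    {f : Fin 8 → ℤ} (hf₀ : f 0 = 0) (hf : IsPowerRelation x p f) :
    (p : ℤ) ∣ f 1 + 3 * f 7 ∧ (p : ℤ) ∣ f 2 + f 4 ∧ (p : ℤ) ∣ f 3 ∧ (p : ℤ) ∣ f 5 + f 6 := by
  have h := hdet ![f 1 + 3 * f 7, f 2 + f 4, f 3, f 5 + f 6] fun l _ hlM ↦ ?_
  · exact ⟨h 0, h 1, h 2, h 3⟩
  have hl : l.Coprime 210 := hM.coprime_dvd_left hlM
  obtain ⟨φ, z, hφ, hz⟩ := exists_ringHom_padic_two hdeg hA hodd hy hn hx hl (hlM.trans hMy)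
  obtain ⟨β, hβ⟩ := hf
  have hne (i : Fin 7) : PadicInt.toZMod (virtualUnit z i.succ) ≠ 0 := by
    rw [map_virtualUnit, hz]
    exact virtualUnit_two_succ_ne_zero hl i
  obtain ⟨s, hs⟩ := exists_pow_eq_prod_toZMod hp hne (g := fun i ↦ f i.succ) (γ := φ β) <| by
    rw [Fin.prod_univ_succ, hf₀, zpow_zero, one_mul] at hβ
    rw [← map_pow, ← hβ, map_prod]
    have hcoe (i) : ((virtualUnit z i : ℤ_[l]) : ℚ_[l]) = virtualUnit (z : ℚ_[l]) i :=
      map_virtualUnit PadicInt.Coe.ringHom z i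
    simp only [map_zpow₀, map_virtualUnit, hφ, hcoe]
  refine ⟨s, hs.trans ?_⟩
  simp only [map_virtualUnit, hz]
  exact prod_virtualUnit_two_zpow (virtualUnit_two_succ_ne_zero hl) f

variable (hM : M.Coprime 210) (hMy : M ∣ y) (hy₀ : y ≠ 0) {p : ℕ} (hpn : p ∣ n) (hp : Odd p)
  (hdet : DetectsPowers ![2, 3, 5, 7] p M)
include hM hMy hy₀ hpn hp hdet

lemma intCast_eq_zero_of_isPowerRelation (hx : aeval x (sextic A) = 0) {f : Fin 8 → ℤ}
    (hf : IsPowerRelation x p f) :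
    (f 1 - f 0 + 3 * f 7 : ZMod p) = 0 ∧ (f 2 + f 0 + f 4 : ZMod p) = 0 ∧
      (f 3 - f 0 : ZMod p) = 0 ∧ (f 5 + f 6 - 2 * f 0 : ZMod p) = 0 := by
  have hsub : f + -f 0 • ![1, -2, -2, 1, 1, 1, 1, 1] = ![0, f 1 + 2 * f 0, f 2 + 2 * f 0,
      f 3 - f 0, f 4 - f 0, f 5 - f 0, f 6 - f 0, f 7 - f 0] := by
    ext i
    fin_cases i <;> simp <;> ring
  have hrel := hf.add_smul (virtualUnit_ne_zero hy hy₀ hx)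
    (isPowerRelation_of_pow_eq hy hy₀ hx hpn hp) (-f 0)
  rw [hsub] at hrel
  obtain ⟨(h₁ : (p : ℤ) ∣ f 1 + 2 * f 0 + 3 * (f 7 - f 0)),
    (h₂ : (p : ℤ) ∣ f 2 + 2 * f 0 + (f 4 - f 0)), (h₃ : (p : ℤ) ∣ f 3 - f 0),
    (h₄ : (p : ℤ) ∣ f 5 - f 0 + (f 6 - f 0))⟩ :=
    dvd_of_isPowerRelation_of_apply_zero_eq_zero hdeg hA hodd hy hn hM hMy hp.pos.ne' hdet hx
      rfl hrel
  rw [← ZMod.intCast_zmod_eq_zero_iff_dvd] at h₁ h₂ h₃ h₄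
  push_cast at h₁ h₂ h₃ h₄
  exact ⟨by linear_combination h₁, by linear_combination h₂, h₃, by linear_combination h₄⟩

theorem forall_dvd_of_isPowerRelation (hx : aeval x (sextic A) = 0) {f : Fin 8 → ℤ}
    (hf₀ : f 0 = 0) (hf : IsPowerRelation x p f) (i : Fin 8) : (p : ℤ) ∣ f i := by
  have test {x : K} (hx : aeval x (sextic A) = 0) {f : Fin 8 → ℤ} (hf : IsPowerRelation x p f) :=
    intCast_eq_zero_of_isPowerRelation hdeg hA hodd hy hn hM hMy hy₀ hpn hp hdet hx hf
  have h₀ : (f 0 : ZMod p) = 0 := by rw [hf₀, Int.cast_zero]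
  obtain ⟨h₁, h₂, h₃, h₄⟩ := test hx hf
  have hneg := test ((aeval_sextic_neg_one_sub A x).trans hx) (hf.neg_one_sub hp)
  obtain ⟨(hn₁ : (f 2 - f 3 + 3 * f 5 : ZMod p) = 0), -, -,
    (hn₄ : (f 7 + f 4 - 2 * f 3 : ZMod p) = 0)⟩ := hneg
  obtain ⟨g, hg, hgf⟩ := hf.exists_inv hp (isUnit_of_aeval_sextic hx).ne_zero
  obtain ⟨-, -, hi₃, hi₄⟩ := test (aeval_sextic_inv hx) hg
  rw [hgf 0 (by decide), hgf 3 (by decide)] at hi₃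
  rw [hgf 0 (by decide), hgf 5 (by decide), hgf 6 (by decide)] at hi₄
  change (f 5 - f 4 : ZMod p) = 0 at hi₃
  change (f 3 + f 7 - 2 * f 4 : ZMod p) = 0 at hi₄
  have hf₃ : (f 3 : ZMod p) = 0 := by linear_combination h₃ + h₀
  have hf₄ : (f 4 : ZMod p) = 0 := by
    linear_combination hn₄ - hi₄ - hn₁ + h₂ + 3 * hi₃ + 2 * hf₃ - h₀
  have hf₅ : (f 5 : ZMod p) = 0 := by linear_combination hi₃ + hf₄
  have hf₇ : (f 7 : ZMod p) = 0 := by linear_combination hn₄ - hf₄ + 2 * hf₃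
  have hf₁ : (f 1 : ZMod p) = 0 := by linear_combination h₁ + h₀ - 3 * hf₇
  have hf₂ : (f 2 : ZMod p) = 0 := by linear_combination h₂ - h₀ - hf₄
  have hf₆ : (f 6 : ZMod p) = 0 := by linear_combination h₄ + 2 * h₀ - hf₅
  rw [← ZMod.intCast_zmod_eq_zero_iff_dvd]
  fin_cases i
  exacts [h₀, hf₁, hf₂, hf₃, hf₄, hf₅, hf₆, hf₇]

end Independence

section SexticClassGroup

variable {A : ℤ} {K : Type*} [Field K] [NumberField K] {x : K} {y n M : ℕ}

lemma exists_pow_eq_of_mem_torsion (h : ∀ s : K, s ^ n = 1 → s = 1) {ζ : (𝓞 K)ˣ}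
    (hζ : ζ ∈ Units.torsion K) : ∃ ξ : (𝓞 K)ˣ, ξ ^ n = ζ := by
  have hinj : Function.Injective (powMonoidHom n : Units.torsion K →* Units.torsion K) := by
    refine (injective_iff_map_eq_one _).mpr fun t ht ↦
      Subtype.ext (Units.coe_injective K (h _ ?_))
    simpa using congrArg (fun t : Units.torsion K ↦ ((t : (𝓞 K)ˣ) : K)) ht
  obtain ⟨ξ, hξ⟩ := Finite.surjective_of_injective hinj ⟨ζ, hζ⟩
  exact ⟨ξ, congrArg Subtype.val hξ⟩

theorem hasZModRankGE_five_classGroup (hdeg : Module.finrank ℚ K = 6) (hA : 6 ≤ A) (hodd : Odd A)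
    (hx : aeval x (sextic A) = 0) (hy : (y : ℤ) ^ n = 36 * A + 127) (hn : Odd n)
    (hcop : y.Coprime 840) (hMy : M ∣ y)
    (hdet : ∀ p ∈ n.primeFactors, DetectsPowers ![2, 3, 5, 7] p M) {l : ℕ} [Fact l.Prime]
    (hly : l ∣ y) (hln : (l * (l - 1)).Coprime n) : HasZModRankGE (ClassGroup (𝓞 K)) n 5 := by
  have hn₀ : n ≠ 0 := hn.pos.ne'
  have hy₀ : y ≠ 0 := by rintro rfl; norm_num at hcop
  have hy₂₁₀ : y.Coprime 210 := hcop.coprime_dvd_right (by norm_num)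
  obtain ⟨φ, -⟩ := exists_ringHom_padic_two hdeg hA hodd hy hn₀ hx (hy₂₁₀.coprime_dvd_left hly) hly
  have hunity (s : K) (hs : s ^ n = 1) : s = 1 :=
    eq_one_of_pow_eq_one_of_ringHom_padic φ hln hn₀ hs
  let α (i : Fin 7) : Kˣ := .mk0 (virtualUnit x i.succ) (virtualUnit_ne_zero hy hy₀ hx i.succ)
  choose I hI using fun i ↦ exists_fractionalIdeal_pow_eq_virtualUnit hn₀ hy hcop hx
    (α := α i) (Units.val_mk0 _)
  have hα (p : ℕ) (hp : p ∈ n.primeFactors) (f : Fin 7 → ℤ) (β : Kˣ)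
      (h : ∏ i, α i ^ f i = β ^ p) (i : Fin 7) : (p : ℤ) ∣ f i := by
    have hpn := Nat.dvd_of_mem_primeFactors hp
    refine forall_dvd_of_isPowerRelation hdeg hA hodd hy hn₀ (hy₂₁₀.coprime_dvd_left hMy) hMy hy₀
      hpn (hn.of_dvd_nat hpn) (hdet p hp) hx (f := Fin.cons 0 f) rfl ⟨β, ?_⟩ i.succ
    rw [Fin.prod_univ_succ, Fin.cons_zero, zpow_zero, one_mul]
    simpa [α] using congrArg Units.val h
  have : IsTotallyComplex K :=
    isTotallyComplex_of_totallyImaginary (totallyImaginary_of_aeval_sextic hA hx)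
  refine hasZModRankGE_classGroup (fun ζ hζ ↦ exists_pow_eq_of_mem_torsion hunity hζ) hI
    (fun f β h ↦ dvd_of_prod_zpow_eq_pow hn₀ (fun g hg ↦ Units.ext (hunity _ ?_)) hα dvd_rfl h) ?_
  · rw [← Units.val_pow_eq_pow_val, hg, Units.val_one]
  · have := two_mul_rank_add_one_eq_finrank (K := K)
    rw [Fintype.card_fin]
    omega

end SexticClassGroup

section SexticFields

variable {n y M : ℕ} {A : ℤ}

-- The witness is fixed by the automorphisms of order three and generates `ℚ(√(100 - yⁿ))`.
lemma exists_sq_eq_of_aeval_sextic {K : Type*} [Field K] [CharZero K] {x : K}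
    (hx : aeval x (sextic A) = 0) : ∃ s : K, s ^ 2 = ((-36 * A - 27 : ℤ) : K) := by
  have h₀ := (isUnit_of_aeval_sextic hx).ne_zero
  have h₁ := (isUnit_add_one_of_aeval_sextic hx).ne_zero
  rw [aeval_sextic] at hx
  refine ⟨3 * ((x - 1) * (x + 2) * (2 * x + 1)) / (x * (x + 1)), ?_⟩
  push_cast
  field_simp
  linear_combination 36 * hx

lemma exists_zmod_pow_eq_of_padic {q : ℕ} [Fact q.Prime] {m : ℕ} (hm : m ≠ 0) {d : ℤ}
    {s : ℚ_[q]} (hs : s ^ m = d) : ∃ r : ZMod q, r ^ m = d := by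
  have hint : IsIntegral ℤ_[q] (s ^ m) := by
    rw [hs, ← map_intCast (algebraMap ℤ_[q] ℚ_[q])]
    exact isIntegral_algebraMap
  obtain ⟨z, rfl⟩ := IsIntegrallyClosed.isIntegral_iff.mp (hint.of_pow (Nat.pos_of_ne_zero hm))
  have hz : z ^ m = d := IsFractionRing.injective ℤ_[q] ℚ_[q] (by simpa using hs)
  exact ⟨PadicInt.toZMod z, by rw [← map_pow, hz, map_intCast]⟩

lemma exists_prime_gt_isEmpty_ringHom_padic {K : Type*} [Field K] {p : ℕ} (hp : p.Prime) {d : ℤ}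
    {s : K} (hs : s ^ p = d) (hd : ∀ b : ℚ, b ^ p ≠ d) (B : ℕ) :
    ∃ q > B, ∃ _ : Fact q.Prime, IsEmpty (K →+* ℚ_[q]) := by
  obtain ⟨q, hqB, hq, hne⟩ := exists_prime_gt_forall_pow_ne hp hd B
  have : Fact q.Prime := ⟨hq⟩
  refine ⟨q, hqB, this, ⟨fun φ ↦ ?_⟩⟩
  obtain ⟨r, hr⟩ := exists_zmod_pow_eq_of_padic hp.ne_zero
    (show φ s ^ p = d by rw [← map_pow, hs, map_intCast])
  exact hne r hr

lemma exists_prime_gt_isEmpty_ringHom_padic_of_aeval_sextic {K : Type*} [Field K] [CharZero K]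
    {x : K} (hA : 0 ≤ A) (hx : aeval x (sextic A) = 0) (B : ℕ) :
    ∃ q > B, ∃ _ : Fact q.Prime, IsEmpty (K →+* ℚ_[q]) := by
  obtain ⟨s, hs⟩ := exists_sq_eq_of_aeval_sextic hx
  have hneg : (-36 * A - 27 : ℤ) < 0 := by lia
  exact exists_prime_gt_isEmpty_ringHom_padic Nat.prime_two hs
    (fun b hb ↦ (sq_nonneg b).not_gt (hb.trans_lt (Int.cast_lt_zero.mpr hneg))) B

/-- The pairs `(y, A)` with `yⁿ = 36A + 127` for which the field of `sextic A` is studied. Odd `A`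
makes `sextic A` reduce to `Φ₇` modulo `2`, `6 < A` keeps it without real roots, and `y` coprime to
`840 = 8 * 3 * 5 * 7` makes the linear forms in a root pairwise coprime. -/
structure IsSexticParameter (n y : ℕ) (A : ℤ) : Prop where
  pow_eq : (y : ℤ) ^ n = 36 * A + 127
  mod_eq : y % 36 = 19
  coprime : y.Coprime 840
  odd : Odd A
  six_lt : 6 < A

lemma IsSexticParameter.pos (hy : IsSexticParameter n y A) : 0 < y := by
  have := hy.mod_eq
  lia

lemma IsSexticParameter.not_dvd (hy : IsSexticParameter n y A) {q : ℕ} (hq : q ≠ 1)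
    (hdvd : q ∣ 840) : ¬ q ∣ y :=
  fun h ↦ hq (Nat.eq_one_of_dvd_coprimes hy.coprime h hdvd)

lemma exists_isSexticParameter (hn : 1 < n) (hodd : Odd n) (hM : M.Coprime 2520) :
    ∃ y A, IsSexticParameter n y A ∧ M ∣ y := by
  -- `1891` is the residue class modulo `2520` of `19` modulo `72` and of `1` modulo `35`.
  obtain ⟨y, hyM, hy⟩ := Nat.chineseRemainder hM 0 1891
  have h72 : y ≡ 19 [MOD 72] := (hy.of_dvd (by norm_num : 72 ∣ 2520)).trans (by decide)
  have h840 : y ≡ 1891 [MOD 840] := hy.of_dvd (by norm_num)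
  have hpow : y ^ n ≡ 19 [MOD 72] := by
    obtain ⟨k, rfl⟩ := hodd
    calc y ^ (2 * k + 1) ≡ 19 ^ (2 * k + 1) [MOD 72] := h72.pow _
      _ = (19 ^ 2) ^ k * 19 := by rw [pow_succ, pow_mul]
      _ ≡ 1 ^ k * 19 [MOD 72] := .mul_right _ (.pow _ (by decide))
      _ = 19 := by rw [one_pow, one_mul]
  have h19 : 19 ≤ y := by
    have := Nat.mod_le y 72
    rwa [h72] at this
  have hlarge : 19 ^ 3 ≤ y ^ n := (Nat.pow_le_pow_left h19 3).trans
    (Nat.pow_le_pow_right (by lia) (by obtain ⟨k, rfl⟩ := hodd; lia))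
  have hmod : y ^ n % 72 = 19 := hpow
  obtain ⟨A, hA⟩ : ∃ A : ℤ, (y : ℤ) ^ n = 36 * (2 * A + 1) + 127 :=
    ⟨((y ^ n : ℕ) - 163) / 72, by push_cast [← hmod]; lia⟩
  refine ⟨y, 2 * A + 1, ⟨hA, ?_, ?_, ⟨A, rfl⟩, ?_⟩, ?_⟩
  · exact h72.of_dvd (by norm_num : 36 ∣ 72)
  · rw [Nat.coprime_iff_gcd_eq_one, h840.gcd_eq]; norm_num
  · zify at hlarge; lia
  · exact (Nat.modEq_zero_iff_dvd).mp hyM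

/-- The subfields of `ℂ` generated by a root of `sextic A` for some parameter `(y, A)` with
`M ∣ y`; they are encoded as the sextic fields that contain such a root. -/
def sexticFields (n M : ℕ) : Set (IntermediateField ℚ ℂ) :=
  {K | Module.finrank ℚ K = 6 ∧
    ∃ y A, IsSexticParameter n y A ∧ M ∣ y ∧ ∃ x : K, aeval x (sextic A) = 0}

lemma sexticFields_anti {M' : ℕ} (h : M ∣ M') : sexticFields n M' ⊆ sexticFields n M :=
  fun _ ⟨hdeg, y, A, hy, hM, hx⟩ ↦ ⟨hdeg, y, A, hy, h.trans hM, hx⟩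

lemma sexticFields_nonempty (hn : 1 < n) (hodd : Odd n) (hM : M.Coprime 2520) :
    (sexticFields n M).Nonempty := by
  obtain ⟨y, A, hy, hMy⟩ := exists_isSexticParameter hn hodd hM
  have hirr := irreducible_map_sextic hy.six_lt.le hy.odd
  obtain ⟨θ, hθ⟩ := IsAlgClosed.exists_aeval_eq_zero ℂ _ (hirr.degree_pos.ne')
  have hmin := minpoly.eq_of_irreducible_of_monic hirr hθ ((monic_sextic A).map _)
  refine ⟨IntermediateField.adjoin ℚ {θ}, ?_, y, A, hy, hMy,
    IntermediateField.AdjoinSimple.gen ℚ θ, ?_⟩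
  · rw [IntermediateField.adjoin.finrank ⟨_, (monic_sextic A).map _, hθ⟩, ← hmin,
      (monic_sextic A).natDegree_map, natDegree_sextic]
  · rw [aeval_map_algebraMap] at hθ
    rwa [← aeval_algebraMap_eq_zero_iff ℂ, IntermediateField.AdjoinSimple.algebraMap_gen]

lemma numberField_of_finrank_ne_zero {K : IntermediateField ℚ ℂ} (h : Module.finrank ℚ K ≠ 0) :
    NumberField K where
  to_finiteDimensional := Module.finite_of_finrank_pos (Nat.pos_of_ne_zero h)

theorem sexticFields_infinite (hn : 1 < n) (hodd : Odd n) (hM : M.Coprime 2520) :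
    (sexticFields n M).Infinite := fun hfin ↦ by
  have hprime (K : IntermediateField ℚ ℂ) (hK : K ∈ sexticFields n M) :
      ∃ q > 2520, ∃ _ : Fact q.Prime, IsEmpty (K →+* ℚ_[q]) := by
    obtain ⟨-, y, A, hy, -, x, hx⟩ := hK
    exact exists_prime_gt_isEmpty_ringHom_padic_of_aeval_sextic (by linarith [hy.six_lt]) hx 2520
  choose! q hqB hq hempty using hprime
  obtain ⟨K, hK⟩ := sexticFields_nonempty (M := M * ∏ K ∈ hfin.toFinset, q K) hn hodd
    (hM.mul_left (Nat.Coprime.prod_left fun K hK ↦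
      have hK := hfin.mem_toFinset.mp hK
      Nat.coprime_of_lt_prime (by norm_num) (hqB K hK) (hq K hK).out))
  have hKM := sexticFields_anti (dvd_mul_right _ _) hK
  obtain ⟨hdeg, y, A, hy, hdvd, x, hx⟩ := hK
  have hqy : q K ∣ y :=
    ((Finset.dvd_prod_of_mem q (hfin.mem_toFinset.mpr hKM)).mul_left M).trans hdvd
  have := numberField_of_finrank_ne_zero (hdeg.trans_ne (by norm_num))
  have := hq K hKM
  obtain ⟨φ, -⟩ := exists_ringHom_padic_two hdeg hy.six_lt.le hy.odd hy.pow_eq (by lia) hx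
    ((hy.coprime.coprime_dvd_left hqy).coprime_dvd_right (by norm_num)) hqy
  exact (hempty K hKM).false φ

lemma eq_of_algEquiv_of_normal {F L : Type*} [Field F] [Field L] [Algebra F L]
    {K K' : IntermediateField F L} (hK : Normal F K) (σ : K ≃ₐ[F] K') : K = K' := by
  rw [← AlgHom.fieldRange_of_normal (K'.val.comp (σ : K →ₐ[F] K')), ← AlgHom.map_fieldRange,
    AlgEquiv.fieldRange_eq_top, ← AlgHom.fieldRange_eq_map, IntermediateField.fieldRange_val]

lemma isGalois_of_mem_sexticFields {K : IntermediateField ℚ ℂ} (hK : K ∈ sexticFields n M) :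
    IsGalois ℚ K := by
  obtain ⟨hdeg, y, A, hy, -, x, hx⟩ := hK
  have := numberField_of_finrank_ne_zero (hdeg.trans_ne (by norm_num))
  exact isGalois_of_aeval_sextic hdeg hy.six_lt.le hy.odd hx

lemma isEmpty_ringEquiv_of_mem_sexticFields {K K' : IntermediateField ℚ ℂ}
    (hK : K ∈ sexticFields n M) (hne : K ≠ K') : IsEmpty (K ≃+* K') :=
  ⟨fun σ ↦ hne (eq_of_algEquiv_of_normal (isGalois_of_mem_sexticFields hK).to_normal
    (AlgEquiv.ofRingEquiv (f := σ) (map_ratCast σ)))⟩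

lemma eq_map_sextic_of_pow_eq (hy : (y : ℤ) ^ n = 36 * A + 127) :
    (X ^ 6 + C 3 * X ^ 5 + C (((y : ℚ) ^ n - 127) / 36) * X ^ 4 +
      C (((y : ℚ) ^ n - 217) / 18) * X ^ 3 + C (((y : ℚ) ^ n - 127) / 36) * X ^ 2 +
      C 3 * X + 1 : ℚ[X]) = (sextic A).map (algebraMap ℤ ℚ) := by
  have hyℚ : (y : ℚ) ^ n = 36 * A + 127 := by exact_mod_cast hy
  have h₁ : ((y : ℚ) ^ n - 127) / 36 = A := by rw [hyℚ]; ring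
  have h₂ : ((y : ℚ) ^ n - 217) / 18 = 2 * A - 5 := by rw [hyℚ]; ring
  rw [h₁, h₂]
  simp [sextic, map_ofNat]

end SexticFields

/-- **`S₃`-fields with large class group (`G = D₃ = S₃`).**
For every odd integer `n > 1` there are infinitely many pairwise non-isomorphic totally
imaginary Galois number fields `K` of degree `6` with Galois group `S₃`, each a splitting
field of an irreducible polynomial
`x⁶ + 3x⁵ + ((yⁿ-127)/36)x⁴ + ((yⁿ-217)/18)x³ + ((yⁿ-127)/36)x² + 3x + 1`
with `y` a positive integer, `y ≡ 19 (mod 36)`, `5 ∤ y` and `7 ∤ y`, such that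
`rank_n Cl(K) ≥ 5`. -/
theorem S3_large_class_group (n : ℕ) (hn : 1 < n) (hodd : Odd n) :
    ∃ S : Set (IntermediateField ℚ ℂ), S.Infinite ∧
      (∀ K ∈ S, ∀ K' ∈ S, K ≠ K' → IsEmpty (K ≃+* K')) ∧
      ∀ K ∈ S, ∃ y : ℕ, 0 < y ∧ y % 36 = 19 ∧ ¬ (5 ∣ y) ∧ ¬ (7 ∣ y) ∧
        (let P : Polynomial ℚ := X ^ 6 + C 3 * X ^ 5 + C (((y : ℚ) ^ n - 127) / 36) * X ^ 4 +
          C (((y : ℚ) ^ n - 217) / 18) * X ^ 3 + C (((y : ℚ) ^ n - 127) / 36) * X ^ 2 +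
          C 3 * X + 1
         Irreducible P ∧ P.IsSplittingField ℚ K) ∧
        NumberField K ∧ Module.finrank ℚ K = 6 ∧ IsGalois ℚ K ∧
        Nonempty ((K ≃ₐ[ℚ] K) ≃* Equiv.Perm (Fin 3)) ∧
        TotallyImaginary K ∧
        HasZModRankGE (ClassGroup (𝓞 K)) n 5 := by
  obtain ⟨M, hM, hdet⟩ := exists_coprime_forall_detectsPowers (q := ![2, 3, 5, 7]) (by decide)
    (by decide) (by norm_num : 2520 ≠ 0) n
  obtain ⟨l, hl, hlp, hln⟩ := exists_prime_gt_coprime_mul_sub_one hodd 2520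
  have : Fact l.Prime := ⟨hlp⟩
  have hMl : (M * l).Coprime 2520 := hM.mul_left (Nat.coprime_of_lt_prime (by norm_num) hl hlp)
  refine ⟨sexticFields n (M * l), sexticFields_infinite hn hodd hMl,
    fun K hK K' _ hne ↦ isEmpty_ringEquiv_of_mem_sexticFields hK hne, ?_⟩
  rintro K ⟨hdeg, y, A, hy, hMly, x, hx⟩
  have hA := hy.six_lt
  have := numberField_of_finrank_ne_zero (hdeg.trans_ne (by norm_num))
  refine ⟨y, hy.pos, hy.mod_eq, hy.not_dvd (by norm_num) (by norm_num),
    hy.not_dvd (by norm_num) (by norm_num), ?_, this, hdeg, ?_, ?_, ?_, ?_⟩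
  · rw [eq_map_sextic_of_pow_eq hy.pow_eq]
    exact ⟨irreducible_map_sextic hA.le hy.odd, isSplittingField_map_sextic hdeg hA.le hy.odd hx⟩
  · exact isGalois_of_aeval_sextic hdeg hA.le hy.odd hx
  · exact algEquiv_mulEquiv_perm_of_aeval_sextic hdeg hA hy.odd hx
  · exact totallyImaginary_of_aeval_sextic hA.le hx
  · exact hasZModRankGE_five_classGroup hdeg hA.le hy.odd hx hy.pow_eq hodd hy.coprime
      (dvd_of_mul_right_dvd hMly) hdet (dvd_of_mul_left_dvd hMly) hln
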